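/- (Discrete Calderón–Vaillancourt theorem.) Let n ≥ 1 and 0 ≤ ρ < 1. Let m : ℤⁿ × ℝⁿ → ℂ be such that for every k ∈ ℤⁿ the function ξ ↦ m(k,ξ) is smooth and ℤⁿ-periodic, and suppose that for all multi-indices α, β there are constants C_{α,β} with |Δ_k^α ∂_ξ^β m(k,ξ)| ≤ C_{α,β} (1 + |k|)^{ρ(|β| − |α|)} for all k ∈ ℤⁿ and ξ ∈ ℝⁿ. Then the pseudo-differential operator t_m f(k) = ∫_{[0,1]ⁿ} e^{2πi k·ξ} m(k,ξ) (𝓕 f)(ξ) dξ is bounded on ℓ²(ℤⁿ): there exists C ≥ 0 such that ‖t_m f‖_{ℓ²(ℤⁿ)} ≤ C ‖f‖_{ℓ²(ℤⁿ)} for every finitely supported f : ℤⁿ → ℂ. -/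

import Mathlib

open MeasureTheory Real ENNReal NNReal

/-- Iterated application of a family of operators according to a multi-index:
`multiOp op α = (op 1)^{α 1} ∘ ⋯ ∘ (op n)^{α n}`. -/
def multiOp {n : ℕ} {F : Type*} (op : Fin n → F → F) (α : Fin n → ℕ) : F → F :=
  (List.ofFn fun i => (op i)^[α i]).foldr (· ∘ ·) id

/-- Partial derivative in the `i`-th coordinate of a function on `ℝⁿ`. -/
noncomputable def pdR {n : ℕ} (i : Fin n) (g : (Fin n → ℝ) → ℂ) : (Fin n → ℝ) → ℂ :=
  fun ξ => deriv (fun t => g (Function.update ξ i t)) (ξ i)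

/-- Partial difference operator in the `i`-th coordinate of a function on `ℤⁿ`:
`Δ_{k_i} g (k) = g(k + e_i) - g(k)`. -/
def diffOp {n : ℕ} (i : Fin n) (g : (Fin n → ℤ) → ℂ) : (Fin n → ℤ) → ℂ :=
  fun k => g (Function.update k i (k i + 1)) - g k

/-- The discrete pseudo-differential operator on `ℤⁿ` with symbol `m`:
`t_m f (k) = ∫_{[0,1]ⁿ} e^{2πi k·ξ} m(k,ξ) (𝓕 f)(ξ) dξ`, where
`(𝓕 f)(ξ) = Σ_{j ∈ ℤⁿ} e^{-2πi j·ξ} f(j)`. -/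
noncomputable def discretePdo (n : ℕ) (m : (Fin n → ℤ) → (Fin n → ℝ) → ℂ)
    (f : (Fin n → ℤ) → ℂ) : (Fin n → ℤ) → ℂ :=
  fun k => ∫ ξ in Set.Icc (0 : Fin n → ℝ) 1,
    Complex.exp (2 * π * Complex.I * (∑ i, (k i : ℝ) * ξ i)) * m k ξ *
      ∑' j : Fin n → ℤ, Complex.exp (-(2 * π * Complex.I * (∑ i, (j i : ℝ) * ξ i))) * f j

/-- The `ℓ²(ℤⁿ)` norm `(Σ_k |f k|²)^{1/2}`. -/
noncomputable def l2Norm {α : Type*} {E : Type*} [NormedAddCommGroup E] (f : α → E) : ℝ≥0∞ :=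
  (∑' k, (‖f k‖₊ : ℝ≥0∞) ^ 2) ^ (1 / 2 : ℝ)

/-! The symbol is frozen in `k` at the scale `sc ρ k = (1 + |k|)^ρ`, on which the hypotheses make it
essentially constant, and the frozen operators are Fourier multipliers, bounded by Parseval.

Fix `k` and regard `(t_m f)(k)` as the value at `y = k` of
`y ↦ T_y f(k) = ∑ l, fc (m y) (k - l) * f l`. The discrete Sobolev inequality `sobolev_box` on a
box of side comparable to `sc ρ k` gives
`|t_m f(k)|² ≲ ∑_α ∑_y sc(y)^{2|α|} sc(y)^{-n} |(Δ_y^α T_y) f(k)|²`,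
the sum being over `α ∈ {0,1}ⁿ` and over the `y` with `|k_i - y_i| ≤ sc ρ y` (`sobolev_sc`). The
operator `Δ_y^α T_y` is the multiplier with symbol `frozen m α y = Δ_k^α m(y, ·)`, which is
`O(sc(y)^{-|α|})`, so the powers of `sc(y)^{|α|}` cancel and what remains is to sum the bounds
over `y`.

For this the contribution of `f l` must decay in `l - y`. Inserting the weight
`wt (sc ρ y) N (l - y)` and expanding `l - y = (k - y) - (k - l)` by the binomial theorem, each
power of `k - l` falls on the symbol as a `ξ`-derivative; it costs a factor `sc ρ y`, which is
exactly the scale in the weight, while `|k_i - y_i| ≤ sc ρ y`. Hence `local_bound`: for fixed `y`,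
`∑_{k near y} |(Δ_y^α T_y) f(k)|² ≲ sc(y)^{-2|α|} ∑_l |f l|² wt(l - y)^{-2}`.
Finally `∑_y sc(y)^{-n} wt(l - y)^{-2}` is bounded uniformly in `l` (`exists_weight_sum`): when
`|l - y| ≤ (1 + |l|)/2` the scales at `l` and `y` are comparable and the sum is a Riemann sum of an
integrable function, while for the other `y` the condition `ρ < 1` makes `|l - y| / sc ρ y` at
least a positive power of `|l - y|`, so that a large `N` suffices.
-/

/-! ### Fourier coefficients of smooth periodic functions -/

/-- The character `ξ ↦ e^{2πi l·ξ}`. -/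
noncomputable def chr {n : ℕ} (l : Fin n → ℤ) (ξ : Fin n → ℝ) : ℂ :=
  Complex.exp (2 * π * Complex.I * (∑ i, (l i : ℝ) * ξ i))

/-- The coefficient `∫_{[0,1]ⁿ} e^{2πi l·ξ} b(ξ) dξ`, that is, the kernel of the convolution
operator `b(D)` on `ℤⁿ`. -/
noncomputable def fc {n : ℕ} (b : (Fin n → ℝ) → ℂ) (l : Fin n → ℤ) : ℂ :=
  ∫ ξ in Set.Icc (0 : Fin n → ℝ) 1, chr l ξ * b ξ

/-- `ℤⁿ`-periodic functions on `ℝⁿ`. -/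
def Per {n : ℕ} (b : (Fin n → ℝ) → ℂ) : Prop :=
  ∀ (ξ : Fin n → ℝ) (j : Fin n → ℤ), b (ξ + fun i => (j i : ℝ)) = b ξ

lemma chr_add {n : ℕ} (k l : Fin n → ℤ) (ξ : Fin n → ℝ) :
    chr (k + l) ξ = chr k ξ * chr l ξ := by
  unfold chr
  rw [← Complex.exp_add]
  congr 1
  simp only [Pi.add_apply, Int.cast_add, add_mul, Finset.sum_add_distrib]
  push_cast
  ring

lemma chr_neg {n : ℕ} (l : Fin n → ℤ) (ξ : Fin n → ℝ) :
    chr (-l) ξ = Complex.exp (-(2 * π * Complex.I * (∑ i, (l i : ℝ) * ξ i))) := by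
  unfold chr
  congr 1
  simp

lemma chr_conj {n : ℕ} (l : Fin n → ℤ) (ξ : Fin n → ℝ) :
    (starRingEnd ℂ) (chr l ξ) = chr (-l) ξ := by
  rw [chr_neg]
  unfold chr
  rw [← Complex.exp_conj]
  congr 1
  have h2 : (starRingEnd ℂ) 2 = 2 := Complex.conj_ofNat 2
  simp only [map_mul, Complex.conj_ofReal, Complex.conj_I, h2]
  ring

lemma norm_chr {n : ℕ} (l : Fin n → ℤ) (ξ : Fin n → ℝ) : ‖chr l ξ‖ = 1 := by
  unfold chr
  rw [show (2 * π * Complex.I * ((∑ i, (l i : ℝ) * ξ i : ℝ) : ℂ)) =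
    ((2 * π * ∑ i, (l i : ℝ) * ξ i : ℝ) : ℂ) * Complex.I by push_cast; ring]
  exact Complex.norm_exp_ofReal_mul_I _

lemma chr_zero {n : ℕ} (ξ : Fin n → ℝ) : chr 0 ξ = 1 := by simp [chr]

lemma contDiff_chr {n : ℕ} (l : Fin n → ℤ) : ContDiff ℝ (⊤ : ℕ∞) (chr l) := by
  unfold chr
  apply ContDiff.cexp
  apply ContDiff.mul contDiff_const
  apply Complex.ofRealCLM.contDiff.comp
  exact ContDiff.sum (s := Finset.univ) fun (i : Fin n) _ =>
    contDiff_const.mul (contDiff_apply ℝ ℝ i)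

lemma per_chr {n : ℕ} (l : Fin n → ℤ) : Per (chr l) := by
  intro ξ j
  unfold chr
  rw [Complex.exp_eq_exp_iff_exists_int]
  refine ⟨∑ i, l i * j i, ?_⟩
  simp only [Pi.add_apply, mul_add, Finset.sum_add_distrib]
  push_cast
  ring

lemma pdR_eq {n : ℕ} (i : Fin n) {g : (Fin n → ℝ) → ℂ} (hg : ContDiff ℝ (⊤ : ℕ∞) g)
    (ξ : Fin n → ℝ) : pdR i g ξ = fderiv ℝ g ξ (Pi.single i 1) := by
  unfold pdR
  have h1 : HasFDerivAt g (fderiv ℝ g ξ) (Function.update ξ i (ξ i)) := by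
    rw [Function.update_eq_self]
    exact (hg.differentiable (by simp)).differentiableAt.hasFDerivAt
  exact (h1.comp_hasDerivAt (ξ i) (hasDerivAt_update ξ i (ξ i))).deriv

lemma contDiff_pdR {n : ℕ} (i : Fin n) {g : (Fin n → ℝ) → ℂ} (hg : ContDiff ℝ (⊤ : ℕ∞) g) :
    ContDiff ℝ (⊤ : ℕ∞) (pdR i g) := by
  rw [show pdR i g = fun ξ => fderiv ℝ g ξ (Pi.single i 1) from funext (pdR_eq i hg)]
  exact (hg.fderiv_right (m := (⊤ : ℕ∞)) (by simp)).clm_apply contDiff_const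

lemma per_pdR {n : ℕ} (i : Fin n) {g : (Fin n → ℝ) → ℂ} (hg : Per g)
    (hg' : ContDiff ℝ (⊤ : ℕ∞) g) : Per (pdR i g) := by
  intro ξ j
  rw [pdR_eq i hg', pdR_eq i hg', ← fderiv_comp_add_right]
  congr 2
  funext x
  exact hg x j

lemma pdR_chr {n : ℕ} (i : Fin n) (l : Fin n → ℤ) (ξ : Fin n → ℝ) :
    pdR i (chr l) ξ = 2 * π * Complex.I * l i * chr l ξ := by
  unfold pdR chr
  have h : HasDerivAt (fun t : ℝ => (∑ j, (l j : ℝ) * Function.update ξ i t j)) (l i : ℝ) (ξ i) := by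
    have : ∀ j ∈ Finset.univ, HasDerivAt (fun t : ℝ => (l j : ℝ) * Function.update ξ i t j)
        ((l j : ℝ) * (Pi.single i 1 : Fin n → ℝ) j) (ξ i) := fun j _ =>
      ((hasDerivAt_pi.1 (hasDerivAt_update ξ i (ξ i))) j).const_mul _
    have h2 := HasDerivAt.fun_sum this
    simpa [Pi.single_apply] using h2
  have h3 := ((h.ofReal_comp).const_mul (2 * π * Complex.I)).cexp.deriv
  rw [h3]
  simp only [Function.update_eq_self]
  push_cast
  ring

lemma pdR_mul {n : ℕ} (i : Fin n) {g h : (Fin n → ℝ) → ℂ} (hg : ContDiff ℝ (⊤ : ℕ∞) g)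
    (hh : ContDiff ℝ (⊤ : ℕ∞) h) (ξ : Fin n → ℝ) :
    pdR i (fun x => g x * h x) ξ = g ξ * pdR i h ξ + pdR i g ξ * h ξ := by
  rw [pdR_eq i (hg.mul hh), pdR_eq i hg, pdR_eq i hh, fderiv_fun_mul
    (hg.differentiable (by simp)).differentiableAt (hh.differentiable (by simp)).differentiableAt]
  simp
  ring

/-- The divergence theorem on the unit cube; the boundary terms cancel by periodicity. -/
lemma integral_pdR {n : ℕ} (i : Fin n) {g : (Fin n → ℝ) → ℂ} (hg : ContDiff ℝ (⊤ : ℕ∞) g)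
    (hp : Per g) : ∫ ξ in Set.Icc (0 : Fin n → ℝ) 1, pdR i g ξ = 0 := by
  cases n with
  | zero => exact i.elim0
  | succ n =>
    have key := integral_divergence_of_hasFDerivAt_off_countable' (0 : Fin (n + 1) → ℝ) 1
      (by intro j; simp) (fun j => if j = i then g else 0)
      (fun j x => if j = i then fderiv ℝ g x else 0) ∅ Set.countable_empty
      (by
        intro j
        split_ifs
        · exact hg.continuous.continuousOn
        · exact continuousOn_const)
      (by
        intro x _ j
        by_cases h : j = i
        · simpa [h] using (hg.differentiable (by simp)).differentiableAt.hasFDerivAt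
        · simp only [h, if_false]
          exact hasFDerivAt_const (0 : ℂ) x)
      (by
        have h2 : (fun x => ∑ j, (if j = i then fderiv ℝ g x else 0) (Pi.single j 1)) =
            fun x => pdR i g x := by
          funext x
          rw [Finset.sum_eq_single i, pdR_eq i hg]
          · simp
          · intro b _ hb
            simp [hb]
          · simp
        rw [h2]
        exact (contDiff_pdR i hg).continuous.integrableOn_Icc)
    have h2 : ∀ x, ∑ j, (if j = i then fderiv ℝ g x else 0) (Pi.single j 1) = pdR i g x := by
      intro x
      rw [Finset.sum_eq_single i, pdR_eq i hg]
      · simp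
      · intro b _ hb
        simp [hb]
      · simp
    simp only [h2] at key
    rw [key]
    refine Finset.sum_eq_zero fun j _ => ?_
    by_cases h : j = i
    · subst h
      simp only [if_true]
      rw [sub_eq_zero]
      congr 1
      funext x
      have := hp (j.insertNth (0 : ℝ) x) (Pi.single j 1)
      simp only [Pi.zero_apply, Pi.one_apply]
      rw [← this]
      congr 1
      funext a
      refine Fin.succAboveCases j ?_ (fun c => ?_) a
      · simp
      · simp [Pi.single_apply, Fin.succAbove_ne]
    · simp [h]

lemma integrableOn_chr_mul {n : ℕ} {b : (Fin n → ℝ) → ℂ} (hb : Continuous b) (l : Fin n → ℤ) :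
    IntegrableOn (fun ξ => chr l ξ * b ξ) (Set.Icc (0 : Fin n → ℝ) 1) :=
  ((contDiff_chr l).continuous.mul hb).integrableOn_Icc

lemma fc_pdR {n : ℕ} (i : Fin n) {b : (Fin n → ℝ) → ℂ} (hb : ContDiff ℝ (⊤ : ℕ∞) b)
    (hp : Per b) (l : Fin n → ℤ) :
    fc (pdR i b) l = (-(2 * π * Complex.I) * l i) * fc b l := by
  have h := integral_pdR i ((contDiff_chr l).mul hb)
    (fun ξ j => by rw [per_chr l ξ j, hp ξ j])
  simp only [pdR_mul i (contDiff_chr l) hb, pdR_chr] at h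
  rw [integral_add (integrableOn_chr_mul (contDiff_pdR i hb).continuous l)] at h
  · simp only [mul_assoc (2 * π * Complex.I * l i : ℂ)] at h
    rw [integral_const_mul] at h
    unfold fc
    linear_combination h
  · simp only [mul_assoc (2 * π * Complex.I * l i : ℂ)]
    exact (integrableOn_chr_mul hb.continuous l).const_mul _

lemma contDiff_pdR_iter {n : ℕ} (i : Fin n) {b : (Fin n → ℝ) → ℂ}
    (hb : ContDiff ℝ (⊤ : ℕ∞) b) (a : ℕ) : ContDiff ℝ (⊤ : ℕ∞) ((pdR i)^[a] b) := by
  induction a with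
  | zero => exact hb
  | succ a ih =>
    rw [Function.iterate_succ_apply']
    exact contDiff_pdR i ih

lemma per_pdR_iter {n : ℕ} (i : Fin n) {b : (Fin n → ℝ) → ℂ}
    (hb : ContDiff ℝ (⊤ : ℕ∞) b) (hp : Per b) (a : ℕ) : Per ((pdR i)^[a] b) := by
  induction a with
  | zero => exact hp
  | succ a ih =>
    rw [Function.iterate_succ_apply']
    exact per_pdR i ih (contDiff_pdR_iter i hb a)

lemma fc_pdR_iter {n : ℕ} (i : Fin n) {b : (Fin n → ℝ) → ℂ} (hb : ContDiff ℝ (⊤ : ℕ∞) b)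
    (hp : Per b) (l : Fin n → ℤ) (a : ℕ) :
    fc ((pdR i)^[a] b) l = (-(2 * π * Complex.I) * l i) ^ a * fc b l := by
  induction a with
  | zero => simp
  | succ a ih =>
    rw [Function.iterate_succ_apply', fc_pdR i (contDiff_pdR_iter i hb a) (per_pdR_iter i hb hp a),
      ih]
    ring

lemma fc_one {n : ℕ} (l : Fin n → ℤ) : fc (fun _ => 1) l = if l = 0 then 1 else 0 := by
  split_ifs with h
  · subst h
    simp [fc, chr_zero, Measure.real, Real.volume_Icc_pi]
  · obtain ⟨i, hi⟩ := Function.ne_iff.1 h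
    have h1 := fc_pdR i (b := fun _ => 1) contDiff_const (fun _ _ => rfl) l
    have h2 : pdR i (fun _ : Fin n → ℝ => (1 : ℂ)) = fun _ => 0 := by
      funext ξ
      simp [pdR]
    rw [h2] at h1
    have h3 : fc (fun _ : Fin n → ℝ => (0 : ℂ)) l = 0 := by simp [fc]
    rw [h3] at h1
    have h4 : (-(2 * π * Complex.I) * l i : ℂ) ≠ 0 := by
      have : (l i : ℂ) ≠ 0 := by exact_mod_cast hi
      simp [this, Real.pi_ne_zero]
    exact (mul_eq_zero.1 h1.symm).resolve_left h4

/-! ### Fourier multipliers on `ℓ²(ℤⁿ)` -/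

lemma memLp_cube {n : ℕ} {g : (Fin n → ℝ) → ℂ} (hg : Continuous g) :
    MemLp g 2 (volume.restrict (Set.Icc (0 : Fin n → ℝ) 1)) := by
  obtain ⟨C, hC⟩ := (isCompact_Icc (a := (0 : Fin n → ℝ)) (b := 1)).exists_bound_of_continuousOn
    hg.continuousOn
  have : IsFiniteMeasure (volume.restrict (Set.Icc (0 : Fin n → ℝ) 1)) :=
    ⟨by simp [Real.volume_Icc_pi]⟩
  refine MemLp.of_bound hg.aestronglyMeasurable C ?_
  exact (ae_restrict_iff' measurableSet_Icc).2 (Filter.Eventually.of_forall hC)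

/-- A continuous function as an element of `L²([0,1]ⁿ)`. -/
noncomputable def toL2 {n : ℕ} (g : (Fin n → ℝ) → ℂ) (hg : Continuous g) :
    Lp ℂ 2 (volume.restrict (Set.Icc (0 : Fin n → ℝ) 1)) :=
  (memLp_cube hg).toLp g

lemma inner_toL2 {n : ℕ} {g h : (Fin n → ℝ) → ℂ} (hg : Continuous g) (hh : Continuous h) :
    inner ℂ (toL2 g hg) (toL2 h hh) =
      ∫ ξ in Set.Icc (0 : Fin n → ℝ) 1, (starRingEnd ℂ) (g ξ) * h ξ := by
  rw [MeasureTheory.L2.inner_def]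
  refine integral_congr_ae ?_
  filter_upwards [(memLp_cube hg).coeFn_toLp, (memLp_cube hh).coeFn_toLp] with ξ h1 h2
  unfold toL2
  rw [h1, h2, RCLike.inner_apply, mul_comm]

lemma orthonormal_chr {n : ℕ} :
    Orthonormal ℂ (fun l : Fin n → ℤ => toL2 (chr (-l)) (contDiff_chr (-l)).continuous) := by
  classical
  rw [orthonormal_iff_ite]
  intro k l
  rw [inner_toL2]
  have := fc_one (k - l)
  unfold fc at this
  simp only [chr_conj, neg_neg, ← chr_add, ← sub_eq_add_neg]
  simp only [mul_one] at this
  rw [this]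
  simp [sub_eq_zero]

lemma toL2_sum {n : ℕ} (s : Finset (Fin n → ℤ)) (g : (Fin n → ℤ) → ℂ)
    (hc : Continuous fun ξ => ∑ l ∈ s, g l * chr (-l) ξ) :
    toL2 _ hc = ∑ l ∈ s, g l • toL2 (chr (-l)) (contDiff_chr (-l)).continuous := by
  apply Lp.ext
  have h1 := (memLp_cube hc).coeFn_toLp
  have h2 := Lp.coeFn_finsetSum s
    (fun l => g l • toL2 (chr (-l)) (contDiff_chr (-l)).continuous)
  have h3 : ∀ᵐ ξ ∂(volume.restrict (Set.Icc (0 : Fin n → ℝ) 1)), ∀ l ∈ s,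
      (g l • toL2 (chr (-l)) (contDiff_chr (-l)).continuous :
        Lp ℂ 2 (volume.restrict (Set.Icc (0 : Fin n → ℝ) 1))) ξ = g l * chr (-l) ξ := by
    rw [Filter.eventually_all_finset]
    intro l _
    filter_upwards [Lp.coeFn_smul (g l) (toL2 (chr (-l)) (contDiff_chr (-l)).continuous),
      (memLp_cube (contDiff_chr (-l)).continuous).coeFn_toLp] with ξ h4 h5
    rw [h4, Pi.smul_apply, smul_eq_mul]
    congr 1
  filter_upwards [h1, h2, h3] with ξ h4 h5 h6
  rw [h5, Finset.sum_apply, Finset.sum_congr rfl h6]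
  exact h4

/-- `b(D)` is bounded on `ℓ²(ℤⁿ)` with norm at most `sup |b|`. -/
lemma multiplier_bound {n : ℕ} {b : (Fin n → ℝ) → ℂ} (hb : Continuous b) {B : ℝ}
    (hbB : ∀ ξ, ‖b ξ‖ ≤ B) (s : Finset (Fin n → ℤ)) (g : (Fin n → ℤ) → ℂ)
    (K : Finset (Fin n → ℤ)) :
    ∑ k ∈ K, ‖∑ l ∈ s, fc b (k - l) * g l‖ ^ 2 ≤ B ^ 2 * ∑ l ∈ s, ‖g l‖ ^ 2 := by
  have hc : Continuous fun ξ => ∑ l ∈ s, g l * chr (-l) ξ :=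
    continuous_finsetSum _ fun l _ => continuous_const.mul (contDiff_chr (-l)).continuous
  have hH : Continuous fun ξ => b ξ * ∑ l ∈ s, g l * chr (-l) ξ := hb.mul hc
  have h1 : ∀ k, ∑ l ∈ s, fc b (k - l) * g l =
      inner ℂ (toL2 (chr (-k)) (contDiff_chr (-k)).continuous) (toL2 _ hH) := by
    intro k
    rw [inner_toL2]
    simp only [Finset.mul_sum]
    rw [integral_finsetSum]
    · refine Finset.sum_congr rfl fun l _ => ?_
      unfold fc
      rw [mul_comm, ← integral_const_mul]
      congr 1
      funext ξ
      rw [chr_conj, neg_neg, sub_eq_add_neg, chr_add]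
      ring
    · intro l _
      apply Continuous.integrableOn_Icc
      simp only [chr_conj]
      exact (contDiff_chr _).continuous.mul
        (hb.mul (continuous_const.mul (contDiff_chr (-l)).continuous))
  simp only [h1]
  refine (orthonormal_chr.sum_inner_products_le _).trans ?_
  have h2 : ‖toL2 _ hH‖ ≤ B * ‖toL2 _ hc‖ := by
    apply Lp.norm_le_mul_norm_of_ae_le_mul
    filter_upwards [(memLp_cube hH).coeFn_toLp, (memLp_cube hc).coeFn_toLp] with ξ h1 h2
    unfold toL2
    rw [h1, h2, norm_mul]
    exact mul_le_mul_of_nonneg_right (hbB ξ) (norm_nonneg _)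
  have h3 : ‖toL2 _ hc‖ ^ 2 = ∑ l ∈ s, ‖g l‖ ^ 2 := by
    have h4 := orthonormal_chr.inner_sum g g s
    rw [← toL2_sum s g hc, inner_self_eq_norm_sq_to_K] at h4
    simp only [Complex.conj_mul'] at h4
    apply Complex.ofReal_injective
    push_cast
    exact h4
  rw [← h3, ← mul_pow]
  gcongr

/-! ### Off-diagonal decay of Fourier multipliers -/

/-- The Euclidean norm of a lattice point. -/
noncomputable def nm {n : ℕ} (x : Fin n → ℤ) : ℝ := Real.sqrt (∑ i, ((x i : ℝ)) ^ 2)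

/-- The polynomial weight `1 + Σᵢ (xᵢ/L)^N`, used with `N` even. -/
noncomputable def wt {n : ℕ} (L : ℝ) (N : ℕ) (x : Fin n → ℤ) : ℝ :=
  1 + ∑ i, ((x i : ℝ) / L) ^ N

lemma one_le_wt {n : ℕ} (L : ℝ) (p : ℕ) (x : Fin n → ℤ) : 1 ≤ wt L (2 * p) x := by
  unfold wt
  have : 0 ≤ ∑ i, ((x i : ℝ) / L) ^ (2 * p) :=
    Finset.sum_nonneg fun i _ => (even_two_mul p).pow_nonneg _
  linarith

/-- The binomial expansion of `((lᵢ - yᵢ)/L)^N` around `kᵢ` turns the weight into derivatives of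
the symbol. -/
lemma weight_expand {n : ℕ} {b : (Fin n → ℝ) → ℂ} (hb : ContDiff ℝ (⊤ : ℕ∞) b) (hp : Per b)
    {L : ℝ} (hL : 0 < L) (N : ℕ) (k l y : Fin n → ℤ) :
    fc b (k - l) * (wt L N (l - y) : ℝ) = fc b (k - l) +
      ∑ j ∈ Finset.univ ×ˢ Finset.range (N + 1),
        ((N.choose j.2 : ℂ) * (((k j.1 : ℝ) - y j.1) / L : ℝ) ^ (N - j.2) *
          ((2 * π * Complex.I * L)⁻¹) ^ j.2) * fc ((pdR j.1)^[j.2] b) (k - l) := by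
  have hL' : (L : ℂ) ≠ 0 := by exact_mod_cast hL.ne'
  have hpi : (π : ℂ) ≠ 0 := by exact_mod_cast Real.pi_ne_zero
  unfold wt
  push_cast
  rw [mul_add, mul_one]
  congr 1
  rw [Finset.sum_product, Finset.mul_sum]
  refine Finset.sum_congr rfl fun i _ => ?_
  have h1 : (((l - y) i : ℤ) : ℂ) / L = ((l i : ℂ) - k i) / L + ((k i : ℂ) - y i) / L := by
    simp only [Pi.sub_apply]
    push_cast
    ring
  rw [h1, add_pow, Finset.mul_sum]
  refine Finset.sum_congr rfl fun a _ => ?_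
  rw [fc_pdR_iter i hb hp]
  have h2 : (((l i : ℂ) - k i) / L) ^ a =
      (2 * π * Complex.I * L)⁻¹ ^ a * (-(2 * π * Complex.I) * ((k - l) i : ℤ)) ^ a := by
    rw [← mul_pow]
    congr 1
    have := Complex.I_ne_zero
    simp only [Pi.sub_apply]
    push_cast
    field_simp
    ring
  rw [h2]
  ring

/-- The coefficients in `weight_expand` have size `O(L^{-a})` when `|kᵢ - yᵢ| ≤ L`. -/
lemma norm_coeff_le {L : ℝ} (hL : 0 < L) (N a : ℕ) {u : ℝ} (hu : |u| ≤ L) :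
    ‖(N.choose a : ℂ) * ((u / L : ℝ) : ℂ) ^ (N - a) * ((2 * π * Complex.I * L)⁻¹) ^ a‖ ≤
      2 ^ N * (L⁻¹) ^ a := by
  rw [norm_mul, norm_mul, norm_pow, norm_pow]
  have h1 : ‖(N.choose a : ℂ)‖ ≤ 2 ^ N := by
    rw [Complex.norm_natCast]
    exact_mod_cast Nat.choose_le_two_pow N a
  have h2 : ‖((u / L : ℝ) : ℂ)‖ ≤ 1 := by
    rw [Complex.norm_real, Real.norm_eq_abs, abs_div, abs_of_pos hL]
    exact (div_le_one hL).2 hu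
  have h3 : ‖(2 * π * Complex.I * L : ℂ)⁻¹‖ ≤ L⁻¹ := by
    rw [norm_inv]
    apply inv_anti₀ hL
    simp only [norm_mul, Complex.norm_I, Complex.norm_real, Real.norm_eq_abs, abs_of_pos hL,
      abs_of_pos Real.pi_pos, Complex.norm_ofNat]
    nlinarith [Real.pi_gt_three]
  calc _ ≤ 2 ^ N * 1 ^ (N - a) * (L⁻¹) ^ a := by gcongr
    _ = _ := by simp

/-- A symbol whose derivatives grow like `L^a` gives an operator whose kernel decays at scale `L`:
the part of `b(D) f` near `y` is controlled by `f` divided by a polynomial weight centred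
at `y`. -/
lemma local_bound {n : ℕ} {b : (Fin n → ℝ) → ℂ} (hb : ContDiff ℝ (⊤ : ℕ∞) b) (hp : Per b)
    {L B : ℝ} (hL : 0 < L) (p : ℕ) (hb0 : ∀ ξ, ‖b ξ‖ ≤ B)
    (hbB : ∀ i, ∀ a ≤ 2 * p, ∀ ξ, ‖(pdR i)^[a] b ξ‖ ≤ B * L ^ a)
    (s : Finset (Fin n → ℤ)) (f : (Fin n → ℤ) → ℂ) (y : Fin n → ℤ) (K : Finset (Fin n → ℤ))
    (hK : ∀ k ∈ K, ∀ i, |(k i : ℝ) - y i| ≤ L) :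
    ∑ k ∈ K, ‖∑ l ∈ s, fc b (k - l) * f l‖ ^ 2 ≤
      (2 + 2 * (n * (2 * p + 1) : ℝ) ^ 2 * 4 ^ (2 * p)) * B ^ 2 *
        ∑ l ∈ s, ‖f l‖ ^ 2 / wt L (2 * p) (l - y) ^ 2 := by
  set N := 2 * p with hN
  set J : Finset (Fin n × ℕ) := Finset.univ ×ˢ Finset.range (N + 1) with hJ
  have hwpos : ∀ x : Fin n → ℤ, 0 < wt L N x := fun x => lt_of_lt_of_le one_pos (one_le_wt L p x)
  set g : (Fin n → ℤ) → ℂ := fun l => f l / (wt L N (l - y) : ℝ) with hg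
  set G := ∑ l ∈ s, ‖g l‖ ^ 2 with hG
  have hGe : ∑ l ∈ s, ‖f l‖ ^ 2 / wt L N (l - y) ^ 2 = G := by
    refine Finset.sum_congr rfl fun l _ => ?_
    rw [hg, norm_div, Complex.norm_real, Real.norm_eq_abs, div_pow, sq_abs]
  set q : (Fin n × ℕ) → (Fin n → ℤ) → ℂ := fun j k =>
    ∑ l ∈ s, fc ((pdR j.1)^[j.2] b) (k - l) * g l with hq
  have hpt : ∀ k ∈ K, ‖∑ l ∈ s, fc b (k - l) * f l‖ ^ 2 ≤
      2 * ‖∑ l ∈ s, fc b (k - l) * g l‖ ^ 2 +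
        2 * (J.card * ∑ j ∈ J, (2 ^ N * (L⁻¹) ^ j.2 * ‖q j k‖) ^ 2) := by
    intro k hk
    have h1 : ∑ l ∈ s, fc b (k - l) * f l = ∑ l ∈ s, fc b (k - l) * g l +
        ∑ j ∈ J, ((N.choose j.2 : ℂ) * (((k j.1 : ℝ) - y j.1) / L : ℝ) ^ (N - j.2) *
          ((2 * π * Complex.I * L)⁻¹) ^ j.2) * q j k := by
      simp only [hq, Finset.mul_sum]
      rw [Finset.sum_comm, ← Finset.sum_add_distrib]
      refine Finset.sum_congr rfl fun l _ => ?_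
      have h2 : f l = (wt L N (l - y) : ℝ) * g l := by
        have : ((wt L N (l - y) : ℝ) : ℂ) ≠ 0 := by exact_mod_cast (hwpos _).ne'
        rw [hg]
        field_simp
      conv_lhs => rw [h2, ← mul_assoc, weight_expand hb hp hL N k l y, add_mul, Finset.sum_mul]
      congr 1
      refine Finset.sum_congr rfl fun j _ => ?_
      ring
    rw [h1]
    have h3 : ‖∑ j ∈ J, ((N.choose j.2 : ℂ) * (((k j.1 : ℝ) - y j.1) / L : ℝ) ^ (N - j.2) *
          ((2 * π * Complex.I * L)⁻¹) ^ j.2) * q j k‖ ≤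
        ∑ j ∈ J, 2 ^ N * (L⁻¹) ^ j.2 * ‖q j k‖ := by
      refine norm_sum_le_of_le _ fun j _ => ?_
      rw [norm_mul]
      exact mul_le_mul_of_nonneg_right (norm_coeff_le hL N j.2 (hK k hk j.1)) (norm_nonneg _)
    have h4 := sq_sum_le_card_mul_sum_sq (s := J)
      (f := fun j => 2 ^ N * (L⁻¹) ^ j.2 * ‖q j k‖)
    refine (pow_le_pow_left₀ (norm_nonneg _) (norm_add_le _ _) 2).trans ?_
    refine add_sq_le.trans ?_
    rw [mul_add]
    gcongr
    exact (pow_le_pow_left₀ (norm_nonneg _) h3 2).trans h4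
  have hm0 := multiplier_bound hb.continuous hb0 s g K
  have hm : ∀ j ∈ J, ∑ k ∈ K, (2 ^ N * (L⁻¹) ^ j.2 * ‖q j k‖) ^ 2 ≤ 4 ^ N * (B ^ 2 * G) := by
    intro j hj
    have hj2 : j.2 ≤ 2 * p := by
      have := (Finset.mem_product.1 hj).2
      rw [Finset.mem_range] at this
      omega
    have h1 := multiplier_bound (contDiff_pdR_iter j.1 hb j.2).continuous (hbB j.1 j.2 hj2) s g K
    simp only [mul_pow (2 ^ N * (L⁻¹) ^ j.2)]
    rw [← Finset.mul_sum]
    calc _ ≤ (2 ^ N * (L⁻¹) ^ j.2) ^ 2 * ((B * L ^ j.2) ^ 2 * G) := by gcongr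
      _ = 4 ^ N * (B ^ 2 * G) * ((L⁻¹ * L) ^ j.2) ^ 2 := by
        rw [show (4 : ℝ) = 2 ^ 2 by norm_num, ← pow_mul 2 2 N, mul_comm 2 N, pow_mul 2 N 2]
        ring
      _ = _ := by rw [inv_mul_cancel₀ hL.ne']; simp
  have hcard : (J.card : ℝ) = n * (2 * p + 1) := by
    rw [hJ, Finset.card_product]
    simp [hN]
  rw [hGe]
  calc _ ≤ ∑ k ∈ K, (2 * ‖∑ l ∈ s, fc b (k - l) * g l‖ ^ 2 +
        2 * (J.card * ∑ j ∈ J, (2 ^ N * (L⁻¹) ^ j.2 * ‖q j k‖) ^ 2)) := Finset.sum_le_sum hpt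
    _ = 2 * ∑ k ∈ K, ‖∑ l ∈ s, fc b (k - l) * g l‖ ^ 2 +
        2 * (J.card * ∑ j ∈ J, ∑ k ∈ K, (2 ^ N * (L⁻¹) ^ j.2 * ‖q j k‖) ^ 2) := by
      rw [Finset.sum_add_distrib, ← Finset.mul_sum, ← Finset.mul_sum, ← Finset.mul_sum,
        Finset.sum_comm]
    _ ≤ 2 * (B ^ 2 * G) + 2 * (J.card * ∑ j ∈ J, 4 ^ N * (B ^ 2 * G)) := by
      gcongr with j hj
      exact hm j hj
    _ = _ := by
      rw [Finset.sum_const, nsmul_eq_mul, hcard]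
      ring

/-! ### Iterated differences and a discrete Sobolev inequality -/

lemma multiOp_succ {n : ℕ} {F : Type*} (op : Fin (n + 1) → F → F) (α : Fin (n + 1) → ℕ) (g : F) :
    multiOp op α g = (op 0)^[α 0] (multiOp (fun i => op i.succ) (fun i => α i.succ) g) := by
  simp [multiOp, List.ofFn_succ]

lemma multiOp_zero_index {n : ℕ} {F : Type*} (op : Fin n → F → F) (g : F) :
    multiOp op (fun _ => 0) g = g := by
  induction n with
  | zero => simp [multiOp]
  | succ n ih => rw [multiOp_succ, ih]; rfl

lemma multiOp_single {n : ℕ} {F : Type*} (op : Fin n → F → F) (i : Fin n) (a : ℕ) (g : F) :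
    multiOp op (Pi.single i a) g = (op i)^[a] g := by
  induction n with
  | zero => exact i.elim0
  | succ n ih =>
    rw [multiOp_succ]
    refine Fin.cases ?_ (fun j => ?_) i
    · have : (fun j : Fin n => (Pi.single (0 : Fin (n + 1)) a : Fin (n + 1) → ℕ) j.succ) =
          fun _ => 0 := by
        funext j
        simp
      rw [this, multiOp_zero_index]
      simp
    · have : (fun k : Fin n => (Pi.single j.succ a : Fin (n + 1) → ℕ) k.succ) =
          Pi.single j a := by
        funext k
        simp [Pi.single_apply]
      rw [this, ih]
      simp [(Fin.succ_ne_zero j).symm]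

/-- Iterated differences at a point are finite linear combinations of point values. -/
lemma multiOp_diffOp_repr {n d : ℕ} (e : Fin d → Fin n) (α : Fin d → ℕ) (y : Fin n → ℤ) :
    ∃ μ : (Fin n → ℤ) →₀ ℂ, ∀ g : (Fin n → ℤ) → ℂ,
      multiOp (fun i => diffOp (e i)) α g y = Finsupp.linearCombination ℂ g μ := by
  induction d generalizing y with
  | zero =>
    refine ⟨Finsupp.single y 1, fun g => ?_⟩
    simp [multiOp]
  | succ d ih =>
    have hiter : ∀ (a : ℕ) (y : Fin n → ℤ), ∃ μ : (Fin n → ℤ) →₀ ℂ, ∀ g : (Fin n → ℤ) → ℂ,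
        (diffOp (e 0))^[a] (multiOp (fun i : Fin d => diffOp (e i.succ)) (fun i => α i.succ) g) y =
          Finsupp.linearCombination ℂ g μ := by
      intro a
      induction a with
      | zero => exact fun y => ih (fun i => e i.succ) (fun i => α i.succ) y
      | succ a iha =>
        intro y
        obtain ⟨μ, hμ⟩ := iha (Function.update y (e 0) (y (e 0) + 1))
        obtain ⟨ν, hν⟩ := iha y
        refine ⟨μ - ν, fun g => ?_⟩
        rw [Function.iterate_succ_apply', map_sub, ← hμ, ← hν]
        rfl
    obtain ⟨μ, hμ⟩ := hiter (α 0) y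
    refine ⟨μ, fun g => ?_⟩
    rw [multiOp_succ, hμ]

lemma update_add_single {n : ℕ} (x : Fin n → ℤ) (i : Fin n) (c : ℤ) :
    Function.update x i (x i + c) = x + Pi.single i c := by
  funext j
  by_cases h : j = i
  · subst h; simp
  · simp [h]

/-- The one-variable discrete Sobolev inequality on an interval of length `M`. -/
lemma sobolev_one {n : ℕ} (i : Fin n) (g : (Fin n → ℤ) → ℂ) (x : Fin n → ℤ) {M : ℕ} (hM : 0 < M) :
    ‖g x‖ ^ 2 ≤ 2 / M * ∑ a : Fin 2, (M : ℝ) ^ (2 * (a : ℕ)) *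
      ∑ t : Fin M, ‖(diffOp i)^[a] g (x + Pi.single i ((t : ℕ) : ℤ))‖ ^ 2 := by
  have hM' : (0 : ℝ) < M := by exact_mod_cast hM
  set D : ℕ → ℝ := fun t => ‖diffOp i g (x + Pi.single i (t : ℤ))‖ with hD
  have hstep : ∀ t : ℕ, ‖g x‖ ≤ ‖g (x + Pi.single i (t : ℤ))‖ + ∑ r ∈ Finset.range t, D r := by
    intro t
    induction t with
    | zero => simp
    | succ t ih =>
      rw [Finset.sum_range_succ]
      have h1 : diffOp i g (x + Pi.single i (t : ℤ)) =
          g (x + Pi.single i ((t + 1 : ℕ) : ℤ)) - g (x + Pi.single i (t : ℤ)) := by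
        unfold diffOp
        rw [update_add_single, add_assoc, ← Pi.single_add]
        push_cast
        rfl
      have h2 : ‖g (x + Pi.single i (t : ℤ))‖ ≤
          ‖g (x + Pi.single i ((t + 1 : ℕ) : ℤ))‖ + D t := by
        rw [hD]
        simp only [h1]
        have := norm_sub_norm_le (g (x + Pi.single i (t : ℤ)))
          (g (x + Pi.single i ((t + 1 : ℕ) : ℤ)))
        rw [norm_sub_rev] at this
        linarith
      linarith
  have hD0 : ∀ r, 0 ≤ D r := fun r => norm_nonneg _
  have hsq : ∀ t ∈ Finset.range M, ‖g x‖ ^ 2 ≤ 2 * ‖g (x + Pi.single i (t : ℤ))‖ ^ 2 +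
      2 * (M * ∑ r ∈ Finset.range M, D r ^ 2) := by
    intro t ht
    have h1 : ∑ r ∈ Finset.range t, D r ≤ ∑ r ∈ Finset.range M, D r :=
      Finset.sum_le_sum_of_subset_of_nonneg
        (Finset.range_subset_range.2 (Finset.mem_range.1 ht).le) (fun r _ _ => hD0 r)
    have h2 := sq_sum_le_card_mul_sum_sq (s := Finset.range M) (f := D)
    rw [Finset.card_range] at h2
    have h3 := pow_le_pow_left₀ (norm_nonneg _) ((hstep t).trans (add_le_add_right h1 _)) 2
    have h4 := add_sq_le (a := ‖g (x + Pi.single i (t : ℤ))‖) (b := ∑ r ∈ Finset.range M, D r)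
    linarith
  have hsum := Finset.sum_le_sum hsq
  rw [Finset.sum_const, Finset.card_range, nsmul_eq_mul, Finset.sum_add_distrib,
    ← Finset.mul_sum, Finset.sum_const, Finset.card_range, nsmul_eq_mul] at hsum
  rw [Fin.sum_univ_two]
  simp only [Fin.val_zero, Fin.val_one, Function.iterate_zero, Function.iterate_one, id, mul_zero,
    pow_zero, one_mul, mul_one]
  rw [Fin.sum_univ_eq_sum_range (fun t : ℕ => ‖g (x + (Pi.single i (t : ℤ) : Fin n → ℤ))‖ ^ 2),
    Fin.sum_univ_eq_sum_range (fun t : ℕ =>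
      ‖diffOp i g (x + (Pi.single i (t : ℤ) : Fin n → ℤ))‖ ^ 2)]
  rw [div_mul_eq_mul_div, le_div_iff₀ hM']
  simp only [hD] at hsum
  linarith

lemma sum_fin_succ {d : ℕ} {A : Type*} [Fintype A] (φ : (Fin (d + 1) → A) → ℝ) :
    ∑ v, φ v = ∑ v : Fin d → A, ∑ a : A, φ (Fin.cons a v) := by
  rw [← (Fin.consEquiv fun _ => A).sum_comp, Fintype.sum_prod_type, Finset.sum_comm]
  rfl

/-- The discrete Sobolev inequality on a box of side `M` with lowest corner `x`, in the variables
selected by `e`. -/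
lemma sobolev_box {n d : ℕ} (e : Fin d → Fin n) (g : (Fin n → ℤ) → ℂ) (x : Fin n → ℤ) {M : ℕ}
    (hM : 0 < M) :
    ‖g x‖ ^ 2 ≤ (2 / M) ^ d * ∑ α : Fin d → Fin 2, (M : ℝ) ^ (2 * ∑ i, (α i : ℕ)) *
      ∑ t : Fin d → Fin M, ‖multiOp (fun i => diffOp (e i)) (fun i => (α i : ℕ)) g
        (x + ∑ i, Pi.single (e i) (((t i : Fin M) : ℕ) : ℤ))‖ ^ 2 := by
  induction d with
  | zero => simp [multiOp]
  | succ d ih =>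
    refine (ih fun i => e i.succ).trans ?_
    rw [sum_fin_succ, pow_succ, mul_assoc]
    refine mul_le_mul_of_nonneg_left ?_ (by positivity)
    rw [Finset.mul_sum]
    refine Finset.sum_le_sum fun α _ => ?_
    calc _ ≤ (M : ℝ) ^ (2 * ∑ i, (α i : ℕ)) * ∑ t : Fin d → Fin M,
          (2 / M * ∑ a : Fin 2, (M : ℝ) ^ (2 * (a : ℕ)) * ∑ r : Fin M,
            ‖(diffOp (e 0))^[a] (multiOp (fun i : Fin d => diffOp (e i.succ))
              (fun i => (α i : ℕ)) g)
            (x + ∑ i : Fin d, Pi.single (e i.succ) (((t i : Fin M) : ℕ) : ℤ) +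
              Pi.single (e 0) ((r : ℕ) : ℤ))‖ ^ 2) := by
          refine mul_le_mul_of_nonneg_left (Finset.sum_le_sum fun t _ => ?_) (by positivity)
          exact sobolev_one _ _ _ hM
      _ = _ := by
          rw [← Finset.mul_sum, Finset.sum_comm, mul_left_comm, Finset.mul_sum]
          congr 1
          refine Finset.sum_congr rfl fun a _ => ?_
          rw [← Finset.mul_sum, ← mul_assoc, ← pow_add, sum_fin_succ, Fin.sum_univ_succ]
          simp only [Fin.cons_zero, Fin.cons_succ, multiOp_succ, Fin.sum_univ_succ]
          rw [show 2 * ((a : ℕ) + ∑ i, (α i : ℕ)) = 2 * ∑ i, (α i : ℕ) + 2 * (a : ℕ) by ring]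
          congr 1
          refine Finset.sum_congr rfl fun t _ => Finset.sum_congr rfl fun r _ => ?_
          rw [add_assoc, add_comm (∑ i : Fin d, _)]

/-! ### Lattice sums -/

/-- The scale `(1 + |k|)^ρ` attached to a lattice point. -/
noncomputable def sc {n : ℕ} (ρ : ℝ) (k : Fin n → ℤ) : ℝ := (1 + nm k) ^ ρ

lemma nm_nonneg {n : ℕ} (x : Fin n → ℤ) : 0 ≤ nm x := Real.sqrt_nonneg _

lemma nm_eq {n : ℕ} (x : Fin n → ℤ) :
    nm x = ‖(WithLp.toLp 2 (fun i => (x i : ℝ)) : EuclideanSpace ℝ (Fin n))‖ := by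
  rw [EuclideanSpace.norm_eq]
  simp [nm]

lemma nm_add_le {n : ℕ} (x y : Fin n → ℤ) : nm (x + y) ≤ nm x + nm y := by
  rw [nm_eq, nm_eq, nm_eq]
  refine le_trans (le_of_eq ?_) (norm_add_le _ _)
  congr 1
  ext i
  simp

lemma nm_neg {n : ℕ} (x : Fin n → ℤ) : nm (-x) = nm x := by simp [nm]

lemma abs_le_nm {n : ℕ} (x : Fin n → ℤ) (i : Fin n) : |(x i : ℝ)| ≤ nm x := by
  unfold nm
  apply Real.abs_le_sqrt
  exact Finset.single_le_sum (f := fun i => (x i : ℝ) ^ 2) (fun _ _ => sq_nonneg _)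
    (Finset.mem_univ i)

lemma nm_le_of_abs_le {n : ℕ} (x : Fin n → ℤ) {X : ℝ} (hX : 0 ≤ X) (h : ∀ i, |(x i : ℝ)| ≤ X) :
    nm x ≤ n * X := by
  unfold nm
  apply Real.sqrt_le_iff.2 ⟨by positivity, ?_⟩
  calc ∑ i, (x i : ℝ) ^ 2 ≤ ∑ _i : Fin n, X ^ 2 :=
        Finset.sum_le_sum fun i _ => sq_le_sq' (neg_le_of_abs_le (h i)) (le_of_abs_le (h i))
    _ = n * X ^ 2 := by simp
    _ ≤ (n * X) ^ 2 := by
        rw [mul_pow]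
        have : (n : ℝ) ≤ n ^ 2 := by exact_mod_cast Nat.le_self_pow two_ne_zero n
        gcongr

lemma one_le_sc {n : ℕ} {ρ : ℝ} (hρ : 0 ≤ ρ) (k : Fin n → ℤ) : 1 ≤ sc ρ k :=
  Real.one_le_rpow (by linarith [nm_nonneg k]) hρ

lemma sc_le_of_le {n : ℕ} {ρ : ℝ} (hρ : 0 ≤ ρ) (hρ1 : ρ ≤ 1) {k y : Fin n → ℤ}
    (h : 1 + nm k ≤ 2 * (1 + nm y)) : sc ρ k ≤ 2 * sc ρ y := by
  have h1 := nm_nonneg k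
  have h2 := nm_nonneg y
  unfold sc
  calc (1 + nm k) ^ ρ ≤ (2 * (1 + nm y)) ^ ρ := by gcongr
    _ = 2 ^ ρ * (1 + nm y) ^ ρ := Real.mul_rpow (by norm_num) (by positivity)
    _ ≤ 2 * (1 + nm y) ^ ρ := by
      gcongr
      calc (2 : ℝ) ^ ρ ≤ 2 ^ (1 : ℝ) := Real.rpow_le_rpow_of_exponent_le (by norm_num) hρ1
        _ = 2 := Real.rpow_one 2

/-- The scale varies slowly: it changes by at most a factor `2` on a ball of radius
`(1 + |k|)/2`. -/
lemma sc_comparable {n : ℕ} {ρ : ℝ} (hρ : 0 ≤ ρ) (hρ1 : ρ ≤ 1) {k y : Fin n → ℤ}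
    (h : nm (k - y) ≤ (1 + nm k) / 2) : sc ρ k ≤ 2 * sc ρ y ∧ sc ρ y ≤ 2 * sc ρ k := by
  have h1 := nm_add_le (k - y) y
  have h2 := nm_add_le (-(k - y)) k
  rw [nm_neg] at h2
  rw [sub_add_cancel] at h1
  rw [neg_sub, sub_add_cancel] at h2
  have h3 := nm_nonneg k
  exact ⟨sc_le_of_le hρ hρ1 (by linarith), sc_le_of_le hρ hρ1 (by linarith)⟩

lemma prod_le_max {n : ℕ} (hn : 1 ≤ n) (u : Fin n → ℝ) (hu : ∀ i, 0 ≤ u i) :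
    ∃ i₀, (∀ i, u i ≤ u i₀) ∧ ∏ i, (1 + u i) ≤ (2 * max 1 (u i₀)) ^ n := by
  have : Nonempty (Fin n) := ⟨⟨0, hn⟩⟩
  obtain ⟨i₀, -, h⟩ := Finset.exists_max_image Finset.univ u Finset.univ_nonempty
  refine ⟨i₀, fun i => h i (Finset.mem_univ i), ?_⟩
  calc ∏ i, (1 + u i) ≤ ∏ _i : Fin n, (2 * max 1 (u i₀)) := by
        refine Finset.prod_le_prod (fun i _ => by linarith [hu i]) fun i hi => ?_
        have h1 := h i hi
        have h2 := le_max_left 1 (u i₀)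
        have h3 := le_max_right 1 (u i₀)
        linarith
    _ = _ := by simp

lemma pow_le_wt {n : ℕ} (L : ℝ) (p : ℕ) (x : Fin n → ℤ) (i : Fin n) :
    (|(x i : ℝ)| / L) ^ (2 * p) ≤ wt L (2 * p) x := by
  have h1 : (|(x i : ℝ)| / L) ^ (2 * p) = ((x i : ℝ) / L) ^ (2 * p) := by
    rw [pow_mul, pow_mul, div_pow |(x i : ℝ)|, div_pow (x i : ℝ), sq_abs]
  have h2 := Finset.single_le_sum (f := fun i => ((x i : ℝ) / L) ^ (2 * p))
    (fun i _ => (even_two_mul p).pow_nonneg _) (Finset.mem_univ i)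
  unfold wt
  rw [h1]
  linarith

lemma prod_le_wt {n : ℕ} (hn : 1 ≤ n) {L : ℝ} (hL : 0 < L) {p : ℕ} (hp : n ≤ 2 * p)
    (x : Fin n → ℤ) : ∏ i, (1 + |(x i : ℝ)| / L) ≤ 2 ^ n * wt L (2 * p) x := by
  obtain ⟨i₀, -, h⟩ := prod_le_max hn (fun i => |(x i : ℝ)| / L) (fun i => by positivity)
  refine h.trans ?_
  rw [mul_pow]
  gcongr
  refine (pow_le_pow_right₀ (le_max_left _ _) hp).trans ?_
  rcases max_choice 1 (|(x i₀ : ℝ)| / L) with h | h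
  · rw [h, one_pow]
    exact one_le_wt L p x
  · rw [h]
    exact pow_le_wt L p x i₀

/-- Far from the diagonal the weight at scale `sc ρ y` dominates a fixed summable weight, since
`ρ < 1`. -/
lemma prod_le_wt_far {n : ℕ} (hn : 1 ≤ n) {ρ : ℝ} (hρ : 0 ≤ ρ) (hρ1 : ρ < 1) {p : ℕ}
    (hp : (n : ℝ) ≤ (1 - ρ) * (2 * p : ℕ)) {l y : Fin n → ℤ} (h : 1 + nm l < 2 * nm (l - y)) :
    ∏ i, (1 + |((l - y) i : ℝ)|) ≤ 2 ^ n * (3 * n) ^ (2 * p) * wt (sc ρ y) (2 * p) (l - y) := by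
  set x := l - y with hx
  obtain ⟨i₀, h1, h2⟩ := prod_le_max hn (fun i => |(x i : ℝ)|) (fun i => abs_nonneg _)
  set X := |(x i₀ : ℝ)| with hX
  have hn' : (1 : ℝ) ≤ n := by exact_mod_cast hn
  have hnm := nm_le_of_abs_le x (abs_nonneg _) h1
  have hX1 : 1 ≤ X := by
    have h0 : 0 < X := by
      by_contra hc
      have : X = 0 := le_antisymm (not_lt.1 hc) (abs_nonneg _)
      rw [← hX, this] at hnm
      linarith [nm_nonneg l]
    have h3 : x i₀ ≠ 0 := by
      intro h4
      rw [hX, h4] at h0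
      simp at h0
    have := Int.one_le_abs h3
    rw [hX]
    exact_mod_cast this
  have hX0 : 0 < X := by linarith
  have hy : 1 + nm y ≤ 3 * n * X := by
    have h3 := nm_add_le (-x) l
    rw [nm_neg, hx, neg_sub, sub_add_cancel] at h3
    nlinarith
  have hsc : sc ρ y ≤ 3 * n * X ^ ρ := by
    unfold sc
    calc (1 + nm y) ^ ρ ≤ (3 * n * X) ^ ρ := by
          have := nm_nonneg y
          gcongr
      _ = (3 * n : ℝ) ^ ρ * X ^ ρ := Real.mul_rpow (by positivity) hX0.le
      _ ≤ 3 * n * X ^ ρ := by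
        gcongr
        calc (3 * n : ℝ) ^ ρ ≤ (3 * n) ^ (1 : ℝ) :=
              Real.rpow_le_rpow_of_exponent_le (by linarith) hρ1.le
          _ = _ := Real.rpow_one _
  have hs0 : 0 < sc ρ y := lt_of_lt_of_le one_pos (one_le_sc hρ y)
  have hkey : X ^ n ≤ (3 * n) ^ (2 * p) * wt (sc ρ y) (2 * p) x := by
    have h3 : X ^ (1 - ρ) ≤ 3 * n * (X / sc ρ y) := by
      rw [Real.rpow_sub hX0, Real.rpow_one, ← mul_div_assoc, div_le_div_iff₀ (by positivity) hs0]
      nlinarith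
    calc X ^ n = X ^ (n : ℝ) := (Real.rpow_natCast X n).symm
      _ ≤ X ^ ((1 - ρ) * (2 * p : ℕ)) := Real.rpow_le_rpow_of_exponent_le hX1 hp
      _ = (X ^ (1 - ρ)) ^ (2 * p) := by rw [Real.rpow_mul hX0.le, Real.rpow_natCast]
      _ ≤ (3 * n * (X / sc ρ y)) ^ (2 * p) := by gcongr
      _ = (3 * n) ^ (2 * p) * (X / sc ρ y) ^ (2 * p) := mul_pow _ _ _
      _ ≤ _ := by
        gcongr
        exact pow_le_wt _ p x i₀
  refine h2.trans ?_
  rw [max_eq_right hX1, mul_pow, mul_assoc]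
  gcongr

/-- A Riemann sum of `∫ dx / (1 + |x|)²` of mesh `1/L`, bounded uniformly in `L`. -/
lemma tsum_int_le {L : ℝ} (hL : 1 ≤ L) :
    ∑' x : ℤ, ENNReal.ofReal (L / (L + |(x : ℝ)|) ^ 2) ≤ 4 := by
  have hfin : ∀ K : ℕ, ∑ x ∈ Finset.range K, L / (L + x) ^ 2 ≤
      L / (L - 1 / 2) - L / (L + K - 1 / 2) := by
    -- telescoping: `1 / u ^ 2 ≤ 1 / (u - 1 / 2) - 1 / (u + 1 / 2)`
    intro K
    induction K with
    | zero => simp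
    | succ K ih =>
      rw [Finset.sum_range_succ]
      have hK : (0 : ℝ) ≤ K := Nat.cast_nonneg K
      have h1 : 0 < L + K - 1 / 2 := by linarith
      have h2 : 0 < L + K + 1 / 2 := by linarith
      have h3 : L / (L + K) ^ 2 ≤ L / (L + K - 1 / 2) - L / (L + K + 1 / 2) := by
        rw [div_sub_div _ _ h1.ne' h2.ne', div_le_div_iff₀ (by positivity) (by positivity)]
        nlinarith
      have h4 : (L + ((K + 1 : ℕ) : ℝ) - 1 / 2) = L + K + 1 / 2 := by push_cast; ring
      rw [h4]
      linarith
  have hnat : ∑' x : ℕ, ENNReal.ofReal (L / (L + x) ^ 2) ≤ 2 := by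
    rw [ENNReal.tsum_eq_iSup_nat]
    refine iSup_le fun K => ?_
    rw [← ENNReal.ofReal_sum_of_nonneg (fun x _ => by positivity)]
    rw [show (2 : ℝ≥0∞) = ENNReal.ofReal 2 by simp]
    apply ENNReal.ofReal_le_ofReal
    refine (hfin K).trans ?_
    have h1 : L / (L - 1 / 2) ≤ 2 := by
      rw [div_le_iff₀ (by linarith)]
      linarith
    have h2 : 0 ≤ L / (L + K - 1 / 2) := by
      have : (0 : ℝ) ≤ K := Nat.cast_nonneg K
      apply div_nonneg <;> linarith
    linarith
  have h1 : HasSum (fun x : ℕ => ENNReal.ofReal (L / (L + |((x : ℤ) : ℝ)|) ^ 2))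
      (∑' x : ℕ, ENNReal.ofReal (L / (L + x) ^ 2)) := by
    convert ENNReal.summable.hasSum using 4
    simp
  have h2 : HasSum (fun x : ℕ => ENNReal.ofReal (L / (L + |((-((x : ℤ) + 1) : ℤ) : ℝ)|) ^ 2))
      (∑' x : ℕ, ENNReal.ofReal (L / (L + |((-((x : ℤ) + 1) : ℤ) : ℝ)|) ^ 2)) :=
    ENNReal.summable.hasSum
  have h3 : ∑' x : ℕ, ENNReal.ofReal (L / (L + |((-((x : ℤ) + 1) : ℤ) : ℝ)|) ^ 2) ≤ 2 := by
    refine le_trans (ENNReal.tsum_le_tsum fun x => ?_) hnat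
    apply ENNReal.ofReal_le_ofReal
    have : |((-((x : ℤ) + 1) : ℤ) : ℝ)| = x + 1 := by
      push_cast
      rw [abs_neg, abs_of_nonneg (by positivity)]
    rw [this]
    gcongr
    linarith
  rw [(HasSum.of_nat_of_neg_add_one (f := fun x : ℤ => ENNReal.ofReal (L / (L + |(x : ℝ)|) ^ 2))
    h1 h2).tsum_eq]
  calc _ ≤ (2 : ℝ≥0∞) + 2 := add_le_add hnat h3
    _ = 4 := by norm_num

lemma tsum_prod_pi {n : ℕ} (φ : ℤ → ℝ≥0∞) :
    ∑' x : Fin n → ℤ, ∏ i, φ (x i) = (∑' x, φ x) ^ n := by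
  induction n with
  | zero => simp
  | succ n ih =>
    rw [← (Fin.consEquiv fun _ => ℤ).tsum_eq, pow_succ', ← ih,
      ENNReal.tsum_prod (f := fun (a : ℤ) (v : Fin n → ℤ) =>
        ∏ i, φ ((Fin.consEquiv fun _ => ℤ) (a, v) i)), ← ENNReal.tsum_mul_right]
    congr 1
    funext a
    rw [← ENNReal.tsum_mul_left]
    congr 1
    funext v
    rw [Fin.prod_univ_succ]
    rfl

lemma tsum_prod_le {n : ℕ} {L : ℝ} (hL : 1 ≤ L) (l : Fin n → ℤ) :
    ∑' y : Fin n → ℤ, ENNReal.ofReal (∏ i, L / (L + |((l - y) i : ℝ)|) ^ 2) ≤ 4 ^ n := by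
  have h := (Equiv.subLeft l).tsum_eq
    (fun x : Fin n → ℤ => ENNReal.ofReal (∏ i, L / (L + |(x i : ℝ)|) ^ 2))
  simp only [Equiv.subLeft_apply] at h
  rw [h]
  have h2 : ∀ x : Fin n → ℤ, ENNReal.ofReal (∏ i, L / (L + |(x i : ℝ)|) ^ 2) =
      ∏ i, ENNReal.ofReal (L / (L + |(x i : ℝ)|) ^ 2) := fun x =>
    ENNReal.ofReal_prod_of_nonneg fun i _ => by positivity
  simp only [h2]
  rw [tsum_prod_pi (fun x : ℤ => ENNReal.ofReal (L / (L + |(x : ℝ)|) ^ 2))]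
  gcongr
  exact tsum_int_le hL

/-- The first product dominates for the `y` near `l`, where the scales at `l` and `y` are
comparable, and the second for the other `y`. The point is that neither product involves the scale
at `y`, so both can be summed in `y`. -/
lemma weight_term_le {n : ℕ} (hn : 1 ≤ n) {ρ : ℝ} (hρ : 0 ≤ ρ) (hρ1 : ρ < 1) {p : ℕ}
    (hp : (n : ℝ) ≤ (1 - ρ) * (2 * p : ℕ)) (l y : Fin n → ℤ) :
    1 / (sc ρ y ^ n * wt (sc ρ y) (2 * p) (l - y) ^ 2) ≤
      (32 ^ n + (2 ^ n * (3 * n) ^ (2 * p)) ^ 2) *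
        (∏ i, sc ρ l / (sc ρ l + |((l - y) i : ℝ)|) ^ 2 +
          ∏ i, 1 / (1 + |((l - y) i : ℝ)|) ^ 2) := by
  have hp' : n ≤ 2 * p := by
    have : (n : ℝ) ≤ (2 * p : ℕ) := hp.trans (by
      have : (0 : ℝ) ≤ (2 * p : ℕ) := Nat.cast_nonneg _
      nlinarith)
    exact_mod_cast this
  set x := l - y with hx
  have hy1 := one_le_sc hρ y
  have hl1 := one_le_sc hρ l
  set A := sc ρ y
  set D := sc ρ l
  have hA : 0 < A := by linarith
  have hD : 0 < D := by linarith
  have hw := one_le_wt A p x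
  set w := wt A (2 * p) x with hwdef
  have hw0 : 0 < w := by linarith
  have hP1 : 0 ≤ ∏ i, D / (D + |(x i : ℝ)|) ^ 2 := Finset.prod_nonneg fun i _ => by positivity
  have hP2 : 0 ≤ ∏ i, 1 / (1 + |(x i : ℝ)|) ^ 2 := Finset.prod_nonneg fun i _ => by positivity
  set E := (2 : ℝ) ^ n * (3 * n) ^ (2 * p) with hE
  have hE0 : 0 ≤ E := by positivity
  by_cases hc : nm x ≤ (1 + nm l) / 2
  · have hcomp := sc_comparable hρ hρ1.le hc
    suffices h : 1 / (A ^ n * w ^ 2) ≤ 32 ^ n * ∏ i, D / (D + |(x i : ℝ)|) ^ 2 by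
      nlinarith [mul_nonneg (sq_nonneg E) hP1, mul_nonneg (sq_nonneg E) hP2,
        mul_nonneg (by positivity : (0 : ℝ) ≤ 32 ^ n) hP2]
    have h1 : ∏ i, (D + |(x i : ℝ)|) ≤ 4 ^ n * A ^ n * w := by
      calc ∏ i, (D + |(x i : ℝ)|) ≤ ∏ i, (2 * A * (1 + |(x i : ℝ)| / A)) := by
            refine Finset.prod_le_prod (fun i _ => by positivity) fun i _ => ?_
            have : 2 * A * (1 + |(x i : ℝ)| / A) = 2 * A + 2 * |(x i : ℝ)| := by
              field_simp
            rw [this]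
            linarith [hcomp.1, abs_nonneg (x i : ℝ)]
        _ = (2 * A) ^ n * ∏ i, (1 + |(x i : ℝ)| / A) := by
            rw [Finset.prod_mul_distrib]; simp
        _ ≤ (2 * A) ^ n * (2 ^ n * w) := by
            gcongr
            exact prod_le_wt hn hA hp' x
        _ = 4 ^ n * A ^ n * w := by
            rw [show (4 : ℝ) = 2 * 2 by norm_num, mul_pow, mul_pow]; ring
    have h2 : 0 < ∏ i, (D + |(x i : ℝ)|) := Finset.prod_pos fun i _ => by positivity
    rw [Finset.prod_div_distrib, Finset.prod_pow, ← mul_div_assoc,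
      div_le_div_iff₀ (by positivity) (by positivity)]
    simp only [Finset.prod_const, Finset.card_univ, Fintype.card_fin, one_mul]
    calc (∏ i, (D + |(x i : ℝ)|)) ^ 2 ≤ (4 ^ n * A ^ n * w) ^ 2 := by gcongr
      _ = 16 ^ n * A ^ n * (A ^ n * w ^ 2) := by
          rw [show (16 : ℝ) = 4 * 4 by norm_num, mul_pow 4 4]; ring
      _ ≤ 16 ^ n * (2 * D) ^ n * (A ^ n * w ^ 2) := by
          gcongr
          exact hcomp.2
      _ = 32 ^ n * D ^ n * (A ^ n * w ^ 2) := by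
          rw [show (32 : ℝ) = 16 * 2 by norm_num, mul_pow, mul_pow]; ring
  · suffices h : 1 / (A ^ n * w ^ 2) ≤ E ^ 2 * ∏ i, 1 / (1 + |(x i : ℝ)|) ^ 2 by
      nlinarith [mul_nonneg (sq_nonneg E) hP1,
        mul_nonneg (by positivity : (0 : ℝ) ≤ 32 ^ n) hP1,
        mul_nonneg (by positivity : (0 : ℝ) ≤ 32 ^ n) hP2]
    have h1 := prod_le_wt_far hn hρ hρ1 hp (l := l) (y := y) (by
      rw [← hx]; linarith [not_le.1 hc])
    rw [← hx, ← hE] at h1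
    have h2 : 0 < ∏ i, (1 + |(x i : ℝ)|) := Finset.prod_pos fun i _ => by positivity
    rw [Finset.prod_div_distrib, Finset.prod_pow, ← mul_div_assoc,
      div_le_div_iff₀ (by positivity) (by positivity)]
    simp only [Finset.prod_const_one, one_mul, mul_one]
    calc (∏ i, (1 + |(x i : ℝ)|)) ^ 2 ≤ (E * w) ^ 2 := by gcongr
      _ = E ^ 2 * (1 * w ^ 2) := by ring
      _ ≤ E ^ 2 * (A ^ n * w ^ 2) := by
          gcongr
          exact one_le_pow₀ hy1

/-- The weights `sc(y)^{-n} wt(l - y)^{-2}` are summable in `y`, uniformly in `l`. -/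
lemma exists_weight_sum {n : ℕ} (hn : 1 ≤ n) {ρ : ℝ} (hρ : 0 ≤ ρ) (hρ1 : ρ < 1) :
    ∃ p : ℕ, ∃ C : ℝ, 0 ≤ C ∧ ∀ l : Fin n → ℤ,
      ∑' y : Fin n → ℤ, ENNReal.ofReal (1 / (sc ρ y ^ n * wt (sc ρ y) (2 * p) (l - y) ^ 2)) ≤
        ENNReal.ofReal C := by
  obtain ⟨p, hp⟩ := exists_nat_ge ((n : ℝ) / (1 - ρ))
  have h1ρ : 0 < 1 - ρ := by linarith
  rw [div_le_iff₀ h1ρ] at hp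
  have hp2 : (n : ℝ) ≤ (1 - ρ) * (2 * p : ℕ) := by
    push_cast
    nlinarith [(Nat.cast_nonneg p : (0 : ℝ) ≤ p)]
  set C := (32 : ℝ) ^ n + (2 ^ n * (3 * n) ^ (2 * p)) ^ 2 with hC
  have hC0 : 0 ≤ C := by positivity
  refine ⟨p, C * (4 ^ n + 4 ^ n), by positivity, fun l => ?_⟩
  have hl1 := one_le_sc hρ l
  calc _ ≤ ∑' y : Fin n → ℤ, ENNReal.ofReal C *
        (ENNReal.ofReal (∏ i, sc ρ l / (sc ρ l + |((l - y) i : ℝ)|) ^ 2) +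
          ENNReal.ofReal (∏ i, 1 / (1 + |((l - y) i : ℝ)|) ^ 2)) := by
        refine ENNReal.tsum_le_tsum fun y => ?_
        rw [← ENNReal.ofReal_add (Finset.prod_nonneg fun i _ => by positivity)
          (Finset.prod_nonneg fun i _ => by positivity), ← ENNReal.ofReal_mul hC0]
        exact ENNReal.ofReal_le_ofReal (weight_term_le hn hρ hρ1 hp2 l y)
    _ ≤ ENNReal.ofReal C * (4 ^ n + 4 ^ n) := by
        rw [ENNReal.tsum_mul_left, ENNReal.tsum_add]
        gcongr
        · exact tsum_prod_le hl1 l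
        · exact tsum_prod_le le_rfl l
    _ = _ := by
        have h4 : ENNReal.ofReal ((4 : ℝ) ^ n) = 4 ^ n := by
          rw [ENNReal.ofReal_pow (by norm_num)]
          simp
        rw [ENNReal.ofReal_mul hC0, ENNReal.ofReal_add (p := (4 : ℝ) ^ n) (by positivity) (by positivity), h4]


/-! ### Freezing the symbol -/

lemma pdR_iter_sum {n : ℕ} {ι : Type*} (i : Fin n) (T : Finset ι) (μ : ι → ℂ)
    (g : ι → (Fin n → ℝ) → ℂ) (hg : ∀ z, ContDiff ℝ (⊤ : ℕ∞) (g z)) (a : ℕ) :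
    (pdR i)^[a] (fun ξ => ∑ z ∈ T, μ z * g z ξ) =
      fun ξ => ∑ z ∈ T, μ z * (pdR i)^[a] (g z) ξ := by
  induction a generalizing g with
  | zero => rfl
  | succ a ih =>
    have h : pdR i (fun ξ => ∑ z ∈ T, μ z * g z ξ) = fun ξ => ∑ z ∈ T, μ z * pdR i (g z) ξ := by
      funext ξ
      have hd : ∀ z, DifferentiableAt ℝ (g z) ξ := fun z =>
        ((hg z).differentiable (by simp)).differentiableAt
      rw [pdR_eq i (ContDiff.sum fun z _ => contDiff_const.mul (hg z)),
        fderiv_fun_sum fun z _ => (hd z).const_mul (μ z)]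
      simp only [sum_apply]
      refine Finset.sum_congr rfl fun z _ => ?_
      rw [fderiv_const_mul (hd z), pdR_eq i (hg z)]
      simp
    simp only [Function.iterate_succ, Function.comp_apply]
    rw [h, ih (fun z => pdR i (g z)) fun z => contDiff_pdR i (hg z)]

/-- The symbol `Δ_k^α m(y, ·)`, frozen at `y`. -/
noncomputable def frozen {n : ℕ} (m : (Fin n → ℤ) → (Fin n → ℝ) → ℂ) (α : Fin n → ℕ)
    (y : Fin n → ℤ) : (Fin n → ℝ) → ℂ :=
  fun ξ => multiOp diffOp α (fun k => m k ξ) y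

/-- `Δ^α` at a point is a finite linear combination of point values; hence it commutes with
differentiation and integration in `ξ`. -/
lemma frozen_repr {n : ℕ} (α : Fin n → ℕ) (y : Fin n → ℤ) :
    ∃ (T : Finset (Fin n → ℤ)) (μ : (Fin n → ℤ) → ℂ), ∀ g : (Fin n → ℤ) → ℂ,
      multiOp diffOp α g y = ∑ z ∈ T, μ z * g z := by
  obtain ⟨μ, h⟩ := multiOp_diffOp_repr id α y
  refine ⟨μ.support, μ, fun g => ?_⟩
  have := h g
  simpa [Finsupp.linearCombination_apply, Finsupp.sum] using this

lemma contDiff_frozen {n : ℕ} {m : (Fin n → ℤ) → (Fin n → ℝ) → ℂ}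
    (hm : ∀ k, ContDiff ℝ (⊤ : ℕ∞) (m k)) (α : Fin n → ℕ) (y : Fin n → ℤ) :
    ContDiff ℝ (⊤ : ℕ∞) (frozen m α y) := by
  obtain ⟨T, μ, h⟩ := frozen_repr α y
  unfold frozen
  simp only [h]
  exact ContDiff.sum fun z _ => contDiff_const.mul (hm z)

lemma per_frozen {n : ℕ} {m : (Fin n → ℤ) → (Fin n → ℝ) → ℂ}
    (hp : ∀ k, Per (m k)) (α : Fin n → ℕ) (y : Fin n → ℤ) : Per (frozen m α y) := by
  intro ξ j
  unfold frozen
  simp only [hp _ ξ j]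

lemma pdR_iter_frozen {n : ℕ} {m : (Fin n → ℤ) → (Fin n → ℝ) → ℂ}
    (hm : ∀ k, ContDiff ℝ (⊤ : ℕ∞) (m k)) (α : Fin n → ℕ) (y : Fin n → ℤ) (i : Fin n) (a : ℕ)
    (ξ : Fin n → ℝ) :
    (pdR i)^[a] (frozen m α y) ξ = multiOp diffOp α (fun k => (pdR i)^[a] (m k) ξ) y := by
  obtain ⟨T, μ, h⟩ := frozen_repr α y
  unfold frozen
  simp only [h]
  rw [pdR_iter_sum i T μ m hm a]

/-- Differences in the frozen variable `y` of the operators with symbol `m y` are the operators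
with the differenced symbol. -/
lemma multiOp_frozen {n : ℕ} {m : (Fin n → ℤ) → (Fin n → ℝ) → ℂ}
    (hm : ∀ k, ContDiff ℝ (⊤ : ℕ∞) (m k)) (α : Fin n → ℕ) (y k : Fin n → ℤ)
    (s : Finset (Fin n → ℤ)) (f : (Fin n → ℤ) → ℂ) :
    multiOp diffOp α (fun x => ∑ l ∈ s, fc (m x) (k - l) * f l) y =
      ∑ l ∈ s, fc (frozen m α y) (k - l) * f l := by
  obtain ⟨T, μ, h⟩ := frozen_repr α y
  have h1 : ∀ l, fc (frozen m α y) l = ∑ z ∈ T, μ z * fc (m z) l := by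
    intro l
    unfold frozen fc
    simp only [h, Finset.mul_sum]
    rw [integral_finsetSum]
    · refine Finset.sum_congr rfl fun z _ => ?_
      rw [← integral_const_mul]
      congr 1
      funext ξ
      ring
    · intro z _
      have := (integrableOn_chr_mul (hm z).continuous l).const_mul (μ z)
      refine this.congr (Filter.Eventually.of_forall fun ξ => ?_)
      simp only
      ring
  rw [h]
  simp only [h1, Finset.mul_sum, Finset.sum_mul]
  rw [Finset.sum_comm]
  refine Finset.sum_congr rfl fun l _ => Finset.sum_congr rfl fun z _ => ?_
  ring

/-- The kernel of `t_m` at `(k, l)` is the coefficient of the symbol `m k` at `k - l`. -/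
lemma discretePdo_eq {n : ℕ} {m : (Fin n → ℤ) → (Fin n → ℝ) → ℂ}
    (hm : ∀ k, ContDiff ℝ (⊤ : ℕ∞) (m k)) {f : (Fin n → ℤ) → ℂ} {s : Finset (Fin n → ℤ)}
    (hs : ∀ l ∉ s, f l = 0) (k : Fin n → ℤ) :
    discretePdo n m f k = ∑ l ∈ s, fc (m k) (k - l) * f l := by
  unfold discretePdo
  have h1 : ∀ ξ : Fin n → ℝ, Complex.exp (2 * π * Complex.I * (∑ i, (k i : ℝ) * ξ i)) * m k ξ *
      ∑' j : Fin n → ℤ, Complex.exp (-(2 * π * Complex.I * (∑ i, (j i : ℝ) * ξ i))) * f j =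
      ∑ l ∈ s, chr (k - l) ξ * m k ξ * f l := by
    intro ξ
    rw [tsum_eq_sum (s := s) fun l hl => by rw [hs l hl, mul_zero], Finset.mul_sum]
    refine Finset.sum_congr rfl fun l _ => ?_
    rw [sub_eq_add_neg, chr_add, ← chr_neg]
    change chr k ξ * _ * _ = _
    ring
  simp only [h1]
  rw [integral_finsetSum]
  · refine Finset.sum_congr rfl fun l _ => ?_
    rw [integral_mul_const]
    rfl
  · intro l _
    exact (integrableOn_chr_mul (hm k).continuous (k - l)).mul_const (f l)

/-- The symbol estimates for `Δ_k^α m`, `|αᵢ| ≤ 1`, with a single constant. -/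
lemma exists_frozen_bound {n : ℕ} (hn : 1 ≤ n) {ρ : ℝ} {m : (Fin n → ℤ) → (Fin n → ℝ) → ℂ}
    (hm : ∀ k, ContDiff ℝ (⊤ : ℕ∞) (m k))
    (hsym : ∀ α β : Fin n → ℕ, ∃ C : ℝ, ∀ (k : Fin n → ℤ) (ξ : Fin n → ℝ),
      ‖multiOp diffOp α (fun k' : Fin n → ℤ => multiOp pdR β (m k') ξ) k‖ ≤
        C * (1 + Real.sqrt (∑ i, ((k i : ℝ)) ^ 2)) ^
          (ρ * (((∑ i, β i : ℕ) : ℝ) - ((∑ i, α i : ℕ) : ℝ)))) (N : ℕ) :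
    ∃ D : ℝ, 0 ≤ D ∧ ∀ (α : Fin n → Fin 2) (y : Fin n → ℤ),
      (∀ ξ, ‖frozen m (fun i => (α i : ℕ)) y ξ‖ ≤ D / sc ρ y ^ (∑ i, (α i : ℕ))) ∧
      ∀ i, ∀ a ≤ N, ∀ ξ, ‖(pdR i)^[a] (frozen m (fun i => (α i : ℕ)) y) ξ‖ ≤
        D / sc ρ y ^ (∑ i, (α i : ℕ)) * sc ρ y ^ a := by
  choose C hC using hsym
  set D := ∑ α : Fin n → Fin 2, ∑ i : Fin n, ∑ a ∈ Finset.range (N + 1),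
    |C (fun i => (α i : ℕ)) (Pi.single i a)| with hD
  have key : ∀ (α : Fin n → Fin 2) (y : Fin n → ℤ),
      ∀ i, ∀ a ≤ N, ∀ ξ, ‖(pdR i)^[a] (frozen m (fun i => (α i : ℕ)) y) ξ‖ ≤
        D / sc ρ y ^ (∑ i, (α i : ℕ)) * sc ρ y ^ a := by
    intro α y i a ha ξ
    have h1 := hC (fun i => (α i : ℕ)) (Pi.single i a) y ξ
    simp only [multiOp_single] at h1
    rw [← pdR_iter_frozen hm] at h1
    have hpos : 0 < 1 + nm y := by linarith [nm_nonneg y]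
    have h2 : (1 + nm y) ^ (ρ * (((∑ j, (Pi.single i a : Fin n → ℕ) j : ℕ) : ℝ) -
        ((∑ i, (α i : ℕ) : ℕ) : ℝ))) = sc ρ y ^ a / sc ρ y ^ (∑ i, (α i : ℕ)) := by
      unfold sc
      rw [Finset.sum_pi_single', if_pos (Finset.mem_univ i), mul_sub, Real.rpow_sub hpos,
        Real.rpow_mul hpos.le, Real.rpow_mul hpos.le, Real.rpow_natCast, Real.rpow_natCast]
    have h3 : C (fun i => (α i : ℕ)) (Pi.single i a) ≤ D := by
      refine (le_abs_self _).trans ?_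
      have e1 := Finset.single_le_sum (f := fun a =>
        |C (fun i => (α i : ℕ)) (Pi.single i a)|) (fun a _ => abs_nonneg _)
        (Finset.mem_range.2 (Nat.lt_succ_of_le ha))
      have e2 := Finset.single_le_sum (f := fun i => ∑ a ∈ Finset.range (N + 1),
        |C (fun i => (α i : ℕ)) (Pi.single i a)|)
        (fun i _ => Finset.sum_nonneg fun a _ => abs_nonneg _) (Finset.mem_univ i)
      have e3 := Finset.single_le_sum (f := fun α : Fin n → Fin 2 =>
        ∑ i : Fin n, ∑ a ∈ Finset.range (N + 1), |C (fun i => (α i : ℕ)) (Pi.single i a)|)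
        (fun α _ => Finset.sum_nonneg fun i _ => Finset.sum_nonneg fun a _ => abs_nonneg _)
        (Finset.mem_univ α)
      exact e1.trans (e2.trans e3)
    have h4 : 0 < sc ρ y := Real.rpow_pos_of_pos hpos ρ
    change _ ≤ _ * (1 + nm y) ^ _ at h1
    rw [h2] at h1
    calc _ ≤ _ := h1
      _ ≤ D * (sc ρ y ^ a / sc ρ y ^ (∑ i, (α i : ℕ))) := by gcongr
      _ = _ := by ring
  refine ⟨D, by positivity, fun α y => ⟨fun ξ => ?_, key α y⟩⟩
  simpa using key α y ⟨0, hn⟩ 0 (Nat.zero_le _) ξ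

/-! ### The bound on `ℓ²` -/

/-- In a box of side `sc ρ k / (2n)` with corner `k` the scales are comparable, and `k` lies within
`sc ρ y` of each point `y` of the box. -/
lemma box_geometry {n : ℕ} (hn : 1 ≤ n) {ρ : ℝ} (hρ : 0 ≤ ρ) (hρ1 : ρ ≤ 1) (k y : Fin n → ℤ)
    (h : ∀ i, |((y - k) i : ℝ)| ≤ sc ρ k / (2 * n)) :
    (∀ i, |(k i : ℝ) - y i| ≤ sc ρ y) ∧ sc ρ k ≤ 2 * sc ρ y ∧ sc ρ y ≤ 2 * sc ρ k := by
  have hn' : (1 : ℝ) ≤ n := by exact_mod_cast hn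
  have hk := one_le_sc hρ k
  have h0 : 0 ≤ sc ρ k / (2 * n) := by positivity
  have h1 : sc ρ k ≤ 1 + nm k := by
    have h2 : 1 ≤ 1 + nm k := by linarith [nm_nonneg k]
    calc sc ρ k ≤ (1 + nm k) ^ (1 : ℝ) := Real.rpow_le_rpow_of_exponent_le h2 hρ1
      _ = _ := Real.rpow_one _
  have h2 := nm_le_of_abs_le (y - k) h0 h
  rw [← nm_neg, neg_sub] at h2
  have h3 : (n : ℝ) * (sc ρ k / (2 * n)) = sc ρ k / 2 := by field_simp
  obtain ⟨h4, h5⟩ := sc_comparable hρ hρ1 (k := k) (y := y) (by linarith)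
  refine ⟨fun i => ?_, h4, h5⟩
  have h6 := h i
  rw [abs_sub_comm]
  simp only [Pi.sub_apply, Int.cast_sub] at h6
  refine h6.trans ?_
  rw [div_le_iff₀ (by positivity)]
  nlinarith [one_le_sc hρ y]

/-- The discrete Sobolev inequality at the scale `sc ρ k`, with the box around `k` replaced by the
set of those `y` that see `k` at their own scale `sc ρ y`. -/
lemma sobolev_sc {n : ℕ} (hn : 1 ≤ n) {ρ : ℝ} (hρ : 0 ≤ ρ) (hρ1 : ρ ≤ 1)
    (g : (Fin n → ℤ) → ℂ) (k : Fin n → ℤ) :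
    ENNReal.ofReal (‖g k‖ ^ 2) ≤ ∑ α : Fin n → Fin 2, ∑' y : Fin n → ℤ,
      open Classical in
      if ∀ i, |(k i : ℝ) - y i| ≤ sc ρ y then
        ENNReal.ofReal ((8 * n) ^ n * 16 ^ n * (sc ρ y ^ (2 * ∑ i, (α i : ℕ)) / sc ρ y ^ n)) *
          ENNReal.ofReal (‖multiOp diffOp (fun i => (α i : ℕ)) g y‖ ^ 2)
      else 0 := by
  classical
  have hn' : (1 : ℝ) ≤ n := by exact_mod_cast hn
  have hk := one_le_sc hρ k
  -- boxes of side about `sc ρ k / (2n)` stay in the region where the scales are comparable, and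
  -- are large enough for `1 / M` to be controlled by `1 / sc ρ k`
  set X := sc ρ k / (2 * n) with hX
  have hX0 : 0 ≤ X := by positivity
  have hXk : X ≤ sc ρ k := by
    rw [hX]
    exact div_le_self (by linarith) (by linarith)
  set M := ⌊X⌋₊ + 1 with hM
  have hM1 : X ≤ M := by
    rw [hM]; push_cast; exact (Nat.lt_floor_add_one X).le
  have hM2 : (M : ℝ) ≤ 2 * sc ρ k := by
    rw [hM]; push_cast; linarith [Nat.floor_le hX0]
  have hMpos : 0 < M := Nat.succ_pos _
  have hS := sobolev_box id g k hMpos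
  let φ : (Fin n → Fin M) → (Fin n → ℤ) := fun t => k + fun i => (((t i : Fin M) : ℕ) : ℤ)
  have hφ : Function.Injective φ := by
    intro t t' h
    funext i
    have := congrFun h i
    simp only [φ, Pi.add_apply] at this
    exact Fin.ext (by omega)
  have hgeo : ∀ t, (∀ i, |(k i : ℝ) - φ t i| ≤ sc ρ (φ t)) ∧ sc ρ k ≤ 2 * sc ρ (φ t) ∧
      sc ρ (φ t) ≤ 2 * sc ρ k := by
    intro t
    refine box_geometry hn hρ hρ1 k (φ t) fun i => ?_
    simp only [φ, add_sub_cancel_left, Int.cast_natCast, Nat.abs_cast]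
    exact (Nat.cast_le.2 (Nat.le_of_lt_succ (t i).2)).trans (Nat.floor_le hX0)
  have hcoef : ∀ (α : Fin n → Fin 2) t, (2 / (M : ℝ)) ^ n * (M : ℝ) ^ (2 * ∑ i, (α i : ℕ)) ≤
      (8 * n) ^ n * 16 ^ n * (sc ρ (φ t) ^ (2 * ∑ i, (α i : ℕ)) / sc ρ (φ t) ^ n) := by
    intro α t
    obtain ⟨-, g1, g2⟩ := hgeo t
    have hy := one_le_sc hρ (φ t)
    set A := sc ρ (φ t)
    have hMr : (0 : ℝ) < M := by exact_mod_cast hMpos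
    have e1 : 2 / (M : ℝ) ≤ 8 * n / A := by
      rw [div_le_div_iff₀ hMr (by linarith)]
      have : sc ρ k = X * (2 * n) := by rw [hX]; field_simp
      nlinarith
    have e2 : (M : ℝ) ≤ 4 * A := by linarith
    have e3 : ∑ i, (α i : ℕ) ≤ n := by
      calc ∑ i, (α i : ℕ) ≤ ∑ _i : Fin n, 1 :=
            Finset.sum_le_sum fun i _ => Nat.le_of_lt_succ (α i).2
        _ = n := by simp
    calc (2 / (M : ℝ)) ^ n * (M : ℝ) ^ (2 * ∑ i, (α i : ℕ))
        ≤ (8 * n / A) ^ n * (4 * A) ^ (2 * ∑ i, (α i : ℕ)) := by gcongr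
      _ = (8 * n) ^ n * 16 ^ (∑ i, (α i : ℕ)) * (A ^ (2 * ∑ i, (α i : ℕ)) / A ^ n) := by
          rw [div_pow, mul_pow 4 A, pow_mul 4]; norm_num; ring
      _ ≤ _ := by
          gcongr
          norm_num
  have hS' : ‖g k‖ ^ 2 ≤ ∑ α : Fin n → Fin 2, ∑ t : Fin n → Fin M,
      (8 * n) ^ n * 16 ^ n * (sc ρ (φ t) ^ (2 * ∑ i, (α i : ℕ)) / sc ρ (φ t) ^ n) *
        ‖multiOp diffOp (fun i => (α i : ℕ)) g (φ t)‖ ^ 2 := by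
    refine hS.trans ?_
    rw [Finset.mul_sum]
    refine Finset.sum_le_sum fun α _ => ?_
    rw [← mul_assoc, Finset.mul_sum]
    refine Finset.sum_le_sum fun t _ => ?_
    have h1 : k + ∑ i, Pi.single (id i) (((t i : Fin M) : ℕ) : ℤ) = φ t := by
      simp only [φ, id]
      rw [Finset.univ_sum_single (fun i => (((t i : Fin M) : ℕ) : ℤ))]
    rw [h1]
    exact mul_le_mul_of_nonneg_right (hcoef α t) (by positivity)
  have hpos : ∀ y : Fin n → ℤ, 0 < sc ρ y := fun y => by linarith [one_le_sc hρ y]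
  refine (ENNReal.ofReal_le_ofReal hS').trans ?_
  rw [ENNReal.ofReal_sum_of_nonneg fun α _ => Finset.sum_nonneg fun t _ => by
    have := hpos (φ t); positivity]
  refine Finset.sum_le_sum fun α _ => ?_
  rw [ENNReal.ofReal_sum_of_nonneg fun t _ => by have := hpos (φ t); positivity]
  refine le_trans ?_ (ENNReal.tsum_comp_le_tsum_of_injective hφ _)
  rw [tsum_fintype]
  refine Finset.sum_le_sum fun t _ => ?_
  rw [if_pos (hgeo t).1, ENNReal.ofReal_mul (by have := hpos (φ t); positivity)]

/-- For a fixed `y`, the frozen operators at `y` are bounded on the `k` near `y`, with decay in the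
distance of the support of `f` from `y`. -/
lemma tsum_frozen_le {n : ℕ} {ρ : ℝ} (hρ : 0 ≤ ρ) {m : (Fin n → ℤ) → (Fin n → ℝ) → ℂ}
    (hm : ∀ k, ContDiff ℝ (⊤ : ℕ∞) (m k)) (hp : ∀ k, Per (m k)) (p : ℕ) {D : ℝ}
    (α : Fin n → ℕ) (y : Fin n → ℤ)
    (h0 : ∀ ξ, ‖frozen m α y ξ‖ ≤ D / sc ρ y ^ (∑ i, α i))
    (h1 : ∀ i, ∀ a ≤ 2 * p, ∀ ξ, ‖(pdR i)^[a] (frozen m α y) ξ‖ ≤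
        D / sc ρ y ^ (∑ i, α i) * sc ρ y ^ a)
    (s : Finset (Fin n → ℤ)) (f : (Fin n → ℤ) → ℂ) {C₁ : ℝ} (hC₁ : 0 ≤ C₁) :
    (∑' k : Fin n → ℤ, open Classical in
      if ∀ i, |(k i : ℝ) - y i| ≤ sc ρ y then
        ENNReal.ofReal (C₁ * (sc ρ y ^ (2 * ∑ i, α i) / sc ρ y ^ n)) *
          ENNReal.ofReal (‖∑ l ∈ s, fc (frozen m α y) (k - l) * f l‖ ^ 2)
      else 0) ≤
      ENNReal.ofReal (C₁ * (2 + 2 * (n * (2 * p + 1) : ℝ) ^ 2 * 4 ^ (2 * p)) * D ^ 2) *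
        ∑ l ∈ s, ENNReal.ofReal (‖f l‖ ^ 2) *
          ENNReal.ofReal (1 / (sc ρ y ^ n * wt (sc ρ y) (2 * p) (l - y) ^ 2)) := by
  classical
  have hA : 0 < sc ρ y := by linarith [one_le_sc hρ y]
  set A := sc ρ y
  set E : ℝ := 2 + 2 * (n * (2 * p + 1) : ℝ) ^ 2 * 4 ^ (2 * p) with hE
  have hE0 : 0 ≤ E := by positivity
  rw [ENNReal.tsum_eq_iSup_sum]
  refine iSup_le fun K => ?_
  rw [← Finset.sum_filter]
  have hb := local_bound (contDiff_frozen hm α y) (per_frozen hp α y) hA p h0 h1 s f y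
    (K.filter fun k => ∀ i, |(k i : ℝ) - y i| ≤ A) (fun k hk => (Finset.mem_filter.1 hk).2)
  rw [← hE] at hb
  rw [← Finset.mul_sum, ← ENNReal.ofReal_sum_of_nonneg
    (f := fun k => ‖∑ l ∈ s, fc (frozen m α y) (k - l) * f l‖ ^ 2) (fun k _ => by positivity)]
  simp_rw [← ENNReal.ofReal_mul (sq_nonneg ‖f _‖)]
  rw [← ENNReal.ofReal_sum_of_nonneg
    (f := fun l => ‖f l‖ ^ 2 * (1 / (A ^ n * wt A (2 * p) (l - y) ^ 2)))
    (fun l _ => by positivity),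
    ← ENNReal.ofReal_mul (by positivity), ← ENNReal.ofReal_mul (by positivity)]
  refine ENNReal.ofReal_le_ofReal ?_
  calc _ ≤ C₁ * (A ^ (2 * ∑ i, α i) / A ^ n) * (E * (D / A ^ ∑ i, α i) ^ 2 *
        ∑ l ∈ s, ‖f l‖ ^ 2 / wt A (2 * p) (l - y) ^ 2) :=
        mul_le_mul_of_nonneg_left hb (by positivity)
    _ = _ := by
        generalize ∑ i, α i = N
        simp only [Finset.mul_sum]
        refine Finset.sum_congr rfl fun l _ => ?_
        have := one_le_wt A p (l - y)
        rw [div_pow, ← pow_mul, mul_comm _ 2]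
        field_simp

lemma tsum_discretePdo_le {n : ℕ} (hn : 1 ≤ n) {ρ : ℝ} (hρ0 : 0 ≤ ρ) (hρ1 : ρ < 1)
    {m : (Fin n → ℤ) → (Fin n → ℝ) → ℂ}
    (hm : ∀ k, ContDiff ℝ (⊤ : ℕ∞) (m k)) (hp : ∀ k, Per (m k))
    (hsym : ∀ α β : Fin n → ℕ, ∃ C : ℝ, ∀ (k : Fin n → ℤ) (ξ : Fin n → ℝ),
      ‖multiOp diffOp α (fun k' : Fin n → ℤ => multiOp pdR β (m k') ξ) k‖ ≤
        C * (1 + Real.sqrt (∑ i, ((k i : ℝ)) ^ 2)) ^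
          (ρ * (((∑ i, β i : ℕ) : ℝ) - ((∑ i, α i : ℕ) : ℝ)))) :
    ∃ C : ℝ, 0 ≤ C ∧ ∀ f : (Fin n → ℤ) → ℂ, (Function.support f).Finite →
      ∑' k, ENNReal.ofReal (‖discretePdo n m f k‖ ^ 2) ≤
        ENNReal.ofReal C * ∑' l, ENNReal.ofReal (‖f l‖ ^ 2) := by
  classical
  obtain ⟨p, C₂, hC₂, hw⟩ := exists_weight_sum hn hρ0 hρ1
  obtain ⟨D, hD, hb⟩ := exists_frozen_bound hn hm hsym (2 * p)
  set C₁ : ℝ := (8 * n) ^ n * 16 ^ n with hC₁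
  have hC₁0 : 0 ≤ C₁ := by positivity
  set E : ℝ := C₁ * (2 + 2 * (n * (2 * p + 1) : ℝ) ^ 2 * 4 ^ (2 * p)) * D ^ 2 with hE
  have hE0 : 0 ≤ E := by positivity
  refine ⟨2 ^ n * (E * C₂), by positivity, fun f hf => ?_⟩
  set s := hf.toFinset with hs
  have hs0 : ∀ l ∉ s, f l = 0 := by
    intro l hl
    rw [hs, Set.Finite.mem_toFinset, Function.mem_support, not_not] at hl
    exact hl
  simp only [discretePdo_eq hm hs0]
  have step : ∀ α : Fin n → Fin 2, (∑' k : Fin n → ℤ, ∑' y : Fin n → ℤ,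
      if ∀ i, |(k i : ℝ) - y i| ≤ sc ρ y then
        ENNReal.ofReal (C₁ * (sc ρ y ^ (2 * ∑ i, (α i : ℕ)) / sc ρ y ^ n)) *
          ENNReal.ofReal (‖∑ l ∈ s, fc (frozen m (fun i => (α i : ℕ)) y) (k - l) * f l‖ ^ 2)
      else 0) ≤ ENNReal.ofReal (E * C₂) * ∑' l, ENNReal.ofReal (‖f l‖ ^ 2) := by
    intro α
    rw [ENNReal.tsum_comm]
    calc _ ≤ ∑' y : Fin n → ℤ, ENNReal.ofReal E * ∑ l ∈ s, ENNReal.ofReal (‖f l‖ ^ 2) *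
          ENNReal.ofReal (1 / (sc ρ y ^ n * wt (sc ρ y) (2 * p) (l - y) ^ 2)) := by
          refine ENNReal.tsum_le_tsum fun y => ?_
          convert tsum_frozen_le hρ0 hm hp p (fun i => (α i : ℕ)) y (hb α y).1 (hb α y).2
            s f hC₁0
      _ = ENNReal.ofReal E * ∑ l ∈ s, ENNReal.ofReal (‖f l‖ ^ 2) * ∑' y : Fin n → ℤ,
          ENNReal.ofReal (1 / (sc ρ y ^ n * wt (sc ρ y) (2 * p) (l - y) ^ 2)) := by
          rw [ENNReal.tsum_mul_left, Summable.tsum_finsetSum fun _ _ => ENNReal.summable]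
          simp_rw [ENNReal.tsum_mul_left]
      _ ≤ ENNReal.ofReal E * ∑ l ∈ s, ENNReal.ofReal (‖f l‖ ^ 2) * ENNReal.ofReal C₂ := by
          gcongr with l hl
          exact hw l
      _ = ENNReal.ofReal (E * C₂) * ∑ l ∈ s, ENNReal.ofReal (‖f l‖ ^ 2) := by
          rw [ENNReal.ofReal_mul hE0, ← Finset.sum_mul]
          ring
      _ ≤ _ := by
          gcongr
          exact ENNReal.sum_le_tsum s
  calc _ ≤ ∑' k : Fin n → ℤ, ∑ α : Fin n → Fin 2, ∑' y : Fin n → ℤ,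
      (if ∀ i, |(k i : ℝ) - y i| ≤ sc ρ y then
        ENNReal.ofReal (C₁ * (sc ρ y ^ (2 * ∑ i, (α i : ℕ)) / sc ρ y ^ n)) *
          ENNReal.ofReal (‖∑ l ∈ s, fc (frozen m (fun i => (α i : ℕ)) y) (k - l) * f l‖ ^ 2)
      else 0) := by
        refine ENNReal.tsum_le_tsum fun k => ?_
        have := sobolev_sc hn hρ0 hρ1.le (fun x => ∑ l ∈ s, fc (m x) (k - l) * f l) k
        simp only [multiOp_frozen hm] at this
        convert this
    _ ≤ ∑ α : Fin n → Fin 2, ENNReal.ofReal (E * C₂) * ∑' l, ENNReal.ofReal (‖f l‖ ^ 2) := by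
        rw [Summable.tsum_finsetSum fun _ _ => ENNReal.summable]
        exact Finset.sum_le_sum fun α _ => step α
    _ = _ := by
        rw [Finset.sum_const, nsmul_eq_mul, ENNReal.ofReal_mul (p := 2 ^ n) (by positivity),
          ENNReal.ofReal_pow (by norm_num)]
        simp [mul_assoc]

/-- Discrete Calderón–Vaillancourt theorem: if a symbol `m : ℤⁿ × ℝⁿ → ℂ`, smooth and
`ℤⁿ`-periodic in `ξ`, satisfies `|Δ_k^α ∂_ξ^β m(k,ξ)| ≤ C_{α,β} (1+|k|)^{ρ(|β|-|α|)}` with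
`0 ≤ ρ < 1` for all multi-indices `α, β`, then the pseudo-differential operator `t_m` is
bounded on `ℓ²(ℤⁿ)`. -/
theorem discrete_calderon_vaillancourt (n : ℕ) (hn : 1 ≤ n) (ρ : ℝ) (hρ0 : 0 ≤ ρ) (hρ1 : ρ < 1)
    (m : (Fin n → ℤ) → (Fin n → ℝ) → ℂ)
    (hsmooth : ∀ k, ContDiff ℝ (⊤ : ℕ∞) (m k))
    (hper : ∀ (k : Fin n → ℤ) (ξ : Fin n → ℝ) (j : Fin n → ℤ),
      m k (ξ + fun i => (j i : ℝ)) = m k ξ)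
    (hsym : ∀ α β : Fin n → ℕ, ∃ C : ℝ, ∀ (k : Fin n → ℤ) (ξ : Fin n → ℝ),
      ‖multiOp diffOp α (fun k' : Fin n → ℤ => multiOp pdR β (m k') ξ) k‖ ≤
        C * (1 + Real.sqrt (∑ i, ((k i : ℝ)) ^ 2)) ^
          (ρ * (((∑ i, β i : ℕ) : ℝ) - ((∑ i, α i : ℕ) : ℝ)))) :
    ∃ C : ℝ, 0 ≤ C ∧ ∀ f : (Fin n → ℤ) → ℂ, (Function.support f).Finite →
      l2Norm (discretePdo n m f) ≤ ENNReal.ofReal C * l2Norm f := by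
  obtain ⟨C, hC, h⟩ := tsum_discretePdo_le hn hρ0 hρ1 hsmooth (fun k ξ j => hper k ξ j) hsym
  refine ⟨C ^ (1 / 2 : ℝ), by positivity, fun f hf => ?_⟩
  have e : ∀ z : ℂ, ((‖z‖₊ : ℝ≥0∞)) ^ 2 = ENNReal.ofReal (‖z‖ ^ 2) := by
    intro z
    rw [ENNReal.ofReal_pow (norm_nonneg z), ofReal_norm, enorm_eq_nnnorm]
  unfold l2Norm
  simp only [e]
  rw [← ENNReal.ofReal_rpow_of_nonneg hC (by norm_num),
    ← ENNReal.mul_rpow_of_nonneg _ _ (by norm_num)]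
  exact ENNReal.rpow_le_rpow (h f hf) (by norm_num)
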